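/- arXiv:1111.1428 — 3 statements merged into one kernel-verified Lean document; each statement's English description precedes it below -/
import Mathlib

section
/- Fix integers m, d, z with m ≥ 2 and 0 < z < 3d. Let Z ⊂ ℙ^m be a zero-dimensional closed subscheme with deg(Z) = z; if m > 2, assume in addition that deg(Z) − deg(Z_red) ≤ d, where Z_red is the reduction of Z. Then h^1(I_Z(d)) > 0 if and only if either there is a line L ⊂ ℙ^m with deg(L ∩ Z) ≥ d+2, or there is a conic T ⊂ ℙ^m with deg(T ∩ Z) ≥ 2d+2. -/
open scoped LinearAlgebra.Projectivization

noncomputable section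

/-- The polynomial ring in `m+1` variables over `K`: homogeneous coordinate ring of `ℙ^m`. -/
abbrev PR (K : Type) [Field K] (m : ℕ) : Type := MvPolynomial (Fin (m+1)) K

/-- The space of degree-`d` forms in `m+1` variables. -/
abbrev Hd (K : Type) [Field K] (m d : ℕ) : Submodule K (PR K m) :=
  MvPolynomial.homogeneousSubmodule (Fin (m+1)) K d

/-- Projective `m`-space over `K`. -/
abbrev Pm (K : Type) [Field K] (m : ℕ) := ℙ K (Fin (m+1) → K)

/-- The target projective space `ℙ^n`, `n = C(m+d,m) - 1`, of the degree-`d` Veronese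
embedding, realized as the projectivization of the dual of the space of degree-`d` forms
(the space of degree-`d` symmetric tensors). -/
abbrev PN (K : Type) [Field K] (m d : ℕ) := ℙ K (Module.Dual K (Hd K m d))

variable {K : Type} [Field K] {m : ℕ}

/-- Hilbert function of `R/I` in degree `t`. -/
def hilbQ (I : Ideal (PR K m)) (t : ℕ) : ℕ :=
  Module.finrank K ((Hd K m t).map (Ideal.Quotient.mkₐ K I).toLinearMap)

/-- The degree (length) of the projective scheme defined by `I`: the eventual value of the
Hilbert function of `R/I`. -/
def idealDeg (I : Ideal (PR K m)) : ℕ := Filter.limsup (fun t => hilbQ I t) Filter.atTop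

/-- `h^1(𝓘_Z(d))` for the zero-dimensional scheme `Z` with (saturated) ideal `I`:
it equals `deg Z - dim (R/I)_d`. -/
def h1I (I : Ideal (PR K m)) (d : ℕ) : ℕ := idealDeg I - hilbQ I d

/-- An ideal is homogeneous. -/
def IsHomogI (I : Ideal (PR K m)) : Prop :=
  ∀ f ∈ I, ∀ n : ℕ, MvPolynomial.homogeneousComponent n f ∈ I

/-- An ideal is saturated with respect to the irrelevant maximal ideal. -/
def IsSatI (I : Ideal (PR K m)) : Prop :=
  ∀ f : PR K m, (∀ i, MvPolynomial.X i * f ∈ I) → f ∈ I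

/-- A closed subscheme of `ℙ^m`, given by its saturated homogeneous ideal. -/
structure PSub (K : Type) [Field K] (m : ℕ) where
  I : Ideal (PR K m)
  homog : IsHomogI I
  sat : IsSatI I

/-- A (closed sub)scheme is zero-dimensional iff the Hilbert function of `R/I` is bounded. -/
def IsZeroDimI (I : Ideal (PR K m)) : Prop := ∃ C, ∀ t, hilbQ I t ≤ C

/-- A polynomial vanishes at a projective point (every homogeneous component vanishes
at a representative). -/
def vanishesAt (f : PR K m) (a : Pm K m) : Prop :=
  ∀ n : ℕ, MvPolynomial.eval a.rep (MvPolynomial.homogeneousComponent n f) = 0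

/-- Zero locus of an ideal in `ℙ^m`. -/
def pzeroLocus (I : Ideal (PR K m)) : Set (Pm K m) := {a | ∀ f ∈ I, vanishesAt f a}

/-- The (saturated) homogeneous ideal of a set of points of `ℙ^m`. -/
def idealOfSet (S : Set (Pm K m)) : Ideal (PR K m) :=
  Ideal.span {f : PR K m | (∃ n, f.IsHomogeneous n) ∧ ∀ a ∈ S, MvPolynomial.eval a.rep f = 0}

/-- Saturation of a homogeneous ideal: the smallest saturated homogeneous ideal containing it. -/
def satIdeal (J : Ideal (PR K m)) : Ideal (PR K m) := sInf {J' | J ≤ J' ∧ IsHomogI J' ∧ IsSatI J'}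

/-- The scheme defined by the (saturated) ideal `I` is reduced. -/
def IsReducedI (I : Ideal (PR K m)) : Prop := I = idealOfSet (pzeroLocus I)

/-- Connected component of a zero-dimensional scheme at a point `a`: the largest subscheme
supported at `a`, i.e. the `a`-primary component. -/
def componentAt (I : Ideal (PR K m)) (a : Pm K m) : Ideal (PR K m) :=
  sInf {J | I ≤ J ∧ IsHomogI J ∧ IsSatI J ∧ pzeroLocus J ⊆ {a}}

/-- Residual scheme of `Z` with respect to the hypersurface `f = 0`: the colon ideal `(I_Z : f)`. -/
def resIdeal (I : Ideal (PR K m)) (f : PR K m) : Ideal (PR K m) :=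
  Submodule.colon I (Ideal.span {f})

/-- Degree of the scheme-theoretic intersection of the subschemes defined by `I` and `J`. -/
def interDeg (I J : Ideal (PR K m)) : ℕ := idealDeg (I ⊔ J)

/-- The degree-`d` Veronese image of a vector `v`: the evaluation-at-`v` functional on
degree-`d` forms. -/
def nu (d : ℕ) (v : Fin (m+1) → K) : Module.Dual K (Hd K m d) :=
  (MvPolynomial.aeval v).toLinearMap ∘ₗ (Hd K m d).subtype

/-- The linear span of the Veronese image `ν_d(S)` of a set `S` of points of `ℙ^m`. -/
def dualSpan (d : ℕ) (S : Set (Pm K m)) : Submodule K (Module.Dual K (Hd K m d)) :=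
  Submodule.span K ((fun a => nu d a.rep) '' S)

/-- The linear span `⟨ν_d(Z)⟩` of the Veronese image of the subscheme with ideal `I`:
the annihilator of the degree-`d` part of `I`. -/
def schemeSpanSub (I : Ideal (PR K m)) (d : ℕ) : Submodule K (Module.Dual K (Hd K m d)) where
  carrier := {φ | ∀ f : Hd K m d, (f : PR K m) ∈ I → φ f = 0}
  add_mem' := by
    intro a b ha hb f hf
    simp [LinearMap.add_apply, ha f hf, hb f hf]
  zero_mem' := by intro f hf; simp
  smul_mem' := by
    intro c a ha f hf
    simp [LinearMap.smul_apply, ha f hf]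

/-- `P ∈ ⟨ν_d(Z)⟩`, for `Z` the subscheme with ideal `I`. -/
def inSpanI (I : Ideal (PR K m)) (d : ℕ) (P : PN K m d) : Prop := P.rep ∈ schemeSpanSub I d

/-- `P ∈ ⟨ν_d(S)⟩` for a set `S` of points of `ℙ^m`. -/
def inSpanSet (d : ℕ) (S : Set (Pm K m)) (P : PN K m d) : Prop := P.rep ∈ dualSpan d S

/-- `L` is a linear subspace of `ℙ^m`. -/
def IsLinearSub (L : Set (Pm K m)) : Prop :=
  ∃ W : Submodule K (Fin (m+1) → K), L = {a | a.submodule ≤ W}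

/-- `L` is a line of `ℙ^m`. -/
def IsLine (L : Set (Pm K m)) : Prop :=
  ∃ W : Submodule K (Fin (m+1) → K), Module.finrank K W = 2 ∧ L = {a | a.submodule ≤ W}

/-- `L` is a plane of `ℙ^m`. -/
def IsPlane (L : Set (Pm K m)) : Prop :=
  ∃ W : Submodule K (Fin (m+1) → K), Module.finrank K W = 3 ∧ L = {a | a.submodule ≤ W}

/-- `J` is the (saturated homogeneous) ideal of a conic of `ℙ^m`: a degree-2 curve contained
in a plane (possibly reducible). -/
def IsConic (J : Ideal (PR K m)) : Prop :=
  ∃ (W : Submodule K (Fin (m+1) → K)) (q : PR K m),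
    Module.finrank K W = 3 ∧ q.IsHomogeneous 2 ∧
    q ∉ idealOfSet {a : Pm K m | a.submodule ≤ W} ∧
    J = satIdeal (idealOfSet {a : Pm K m | a.submodule ≤ W} ⊔ Ideal.span {q})

/-- The algebra of polynomial functions on a `K`-vector space. -/
def polyFunctions (K V : Type) [Field K] [AddCommGroup V] [Module K V] : Subalgebra K (V → K) :=
  Algebra.adjoin K {g : V → K | ∃ φ : V →ₗ[K] K, g = ⇑φ}

/-- Zariski closure of a subset of a projective space. -/
def zClosure {V : Type} [AddCommGroup V] [Module K V] (T : Set (ℙ K V)) : Set (ℙ K V) :=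
  {P | ∀ F ∈ polyFunctions K V, (∀ Q ∈ T, ∀ c : K, F (c • Q.rep) = 0) →
    ∀ c : K, F (c • P.rep) = 0}

/-- The Veronese variety `X_{m,d} = ν_d(ℙ^m)` as a subset of `PN K m d`. -/
def XSet (K : Type) [Field K] (m d : ℕ) : Set (PN K m d) :=
  {Q | ∃ a : Pm K m, Q.submodule = Submodule.span K {nu d a.rep}}

/-- The image `ν_d(S)` of a set of points of `ℙ^m`, as a subset of `PN K m d`. -/
def nuSet (d : ℕ) (S : Set (Pm K m)) : Set (PN K m d) :=
  {Q | ∃ a ∈ S, Q.submodule = Submodule.span K {nu d a.rep}}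

/-- The rank of a point `P` of `PN` with respect to a subset `Y ⊆ PN`. -/
def rankWrt {m d : ℕ} (Y : Set (PN K m d)) (P : PN K m d) : ℕ :=
  sInf {r | ∃ S : Finset (PN K m d), ↑S ⊆ Y ∧ S.card = r ∧
    P.rep ∈ Submodule.span K (Projectivization.rep '' (S : Set (PN K m d)))}

/-- The `s`-th secant variety of `Y ⊆ PN`: the Zariski closure of the union of the spans
of `s` points of `Y`. -/
def secantWrt {m d : ℕ} (Y : Set (PN K m d)) (s : ℕ) : Set (PN K m d) :=
  zClosure {Q | ∃ S : Finset (PN K m d), ↑S ⊆ Y ∧ S.card ≤ s ∧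
    Q.rep ∈ Submodule.span K (Projectivization.rep '' (S : Set (PN K m d)))}

/-- The border rank of `P` with respect to `Y ⊆ PN`. -/
def brankWrt {m d : ℕ} (Y : Set (PN K m d)) (P : PN K m d) : ℕ :=
  sInf {s | 0 < s ∧ P ∈ secantWrt Y s}

/-- Symmetric rank. -/
def srank {m : ℕ} (d : ℕ) (P : PN K m d) : ℕ := rankWrt (XSet K m d) P

/-- Border rank. -/
def brank {m : ℕ} (d : ℕ) (P : PN K m d) : ℕ := brankWrt (XSet K m d) P

/-- Cactus rank: minimal degree of a zero-dimensional closed subscheme `E ⊂ ℙ^m` with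
`P ∈ ⟨ν_d(E)⟩`. -/
def crank {m : ℕ} (d : ℕ) (P : PN K m d) : ℕ :=
  sInf {c | ∃ Z : PSub K m, IsZeroDimI Z.I ∧ idealDeg Z.I = c ∧ inSpanI Z.I d P}

/-- `σ_{s,r}(X_{m,d})`. -/
def sigmaSet (K : Type) [Field K] (m d s r : ℕ) : Set (PN K m d) :=
  {P | brank d P = s ∧ srank d P = r}

/-- A property `Φ` holds for a general `k`-tuple of points of the linear subspace of `ℙ^m`
determined by `W`. -/
def GenerallyOn (W : Submodule K (Fin (m+1) → K)) (k : ℕ)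
    (Φ : (Fin k → Pm K m) → Prop) : Prop :=
  ∃ w : Fin 3 → W, Submodule.span K (Set.range fun j => (w j : Fin (m+1) → K)) = W ∧
    ∃ F : MvPolynomial (Fin k × Fin 3) K, F ≠ 0 ∧
      ∀ c : Fin k → Fin 3 → K,
        MvPolynomial.eval (fun p => c p.1 p.2) F ≠ 0 →
        ∀ e : Fin k → Pm K m,
          (∀ i, (e i).submodule = Submodule.span K {∑ j, c i j • (w j : Fin (m+1) → K)}) → Φ e

end


namespace Core
open Module

lemma num (h : ℕ → ℕ) (d z : ℕ) (hz : z < 3 * d) (h0 : h 0 = 1)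
    (hd : h d + 1 = z) (hd1 : h (d+1) = z) (hs : ∀ t, t ≤ d → h t < h (t+1))
    (G1 : ∀ s, h (s+1) ≤ h s + 1 → h (s+2) ≤ h (s+1) + 1)
    (G2 : ∀ s, 1 ≤ s → h (s+1) ≤ h s + 2 → h (s+2) ≤ h (s+1) + 2)
    (CB : ∀ i j, i + j = d → h i + h j ≤ z) :
    (h 1 = 2 ∧ d + 2 ≤ z) ∨ (h 1 = 3 ∧ h 2 ≤ 5 ∧ 2 * d + 2 ≤ z) := by
  -- growth iterates
  have G1' : ∀ s, h (s+1) ≤ h s + 1 → ∀ k, h (s+k+1) ≤ h (s+k) + 1 := by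
    intro s hs1 k
    induction k with
    | zero => exact hs1
    | succ k ih => exact G1 _ ih
  have G2' : ∀ s, 1 ≤ s → h (s+1) ≤ h s + 2 → ∀ k, h (s+k+1) ≤ h (s+k) + 2 := by
    intro s hs0 hs1 k
    induction k with
    | zero => exact hs1
    | succ k ih => exact G2 (s+k) (by clear * - hs0; omega) ih
  have sum1 : ∀ c a n, (∀ t, a ≤ t → t < a + n → h t + c ≤ h (t+1)) → h a + c * n ≤ h (a+n) := by
    intro c a n
    induction n with
    | zero => intro _; simp
    | succ n ih =>
      intro hh
      have := ih (fun t h1 h2 => hh t h1 (by omega))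
      have := hh (a+n) (by omega) (by omega)
      rw [mul_add]; 
      have e : a + (n+1) = a + n + 1 := by ring
      rw [e]; omega
  have hdpos : 1 ≤ d := by omega
  obtain ⟨e, rfl⟩ : ∃ e, d = e + 1 := ⟨d-1, by omega⟩
  have cb1 := CB 1 e (by omega)
  have s0 := hs 0 (by omega)
  have hD : h e + h 1 ≤ h (e+1) + 1 := by omega
  by_cases c3 : 4 ≤ h 1
  · -- all differences >= 3
    exfalso
    have := sum1 3 0 (e+1) (by
      intro t _ ht
      by_contra hcon
      rcases Nat.eq_zero_or_pos t with rfl | htp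
      · rw [Nat.zero_add] at hcon; omega
      · have := G2' t htp (by omega) (e - t)
        rw [show t + (e - t) = e by omega] at this
        omega)
    rw [Nat.zero_add] at this
    omega
  · rcases (show h 1 = 2 ∨ h 1 = 3 by rw [Nat.zero_add] at s0; omega) with h1 | h1
    · left
      refine ⟨h1, ?_⟩
      have := sum1 1 0 (e+2) (by intro t _ ht; have := hs t (by omega); omega)
      rw [Nat.zero_add] at this
      change h (e + 2) = z at hd1
      omega
    · right
      have hall2 : ∀ t, t ≤ e → h t + 2 ≤ h (t+1) := by
        intro t ht
        by_contra hcon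
        have := G1' t (by omega) (e - t)
        rw [show t + (e - t) = e by omega] at this
        omega
      have hz2 : 2 * (e+1) + 2 ≤ z := by
        have := sum1 2 0 (e+1) (by intro t _ ht; exact hall2 t (by omega))
        rw [Nat.zero_add] at this
        omega
      refine ⟨h1, ?_, hz2⟩
      by_contra hcon
      -- some t in [1,e] with small difference
      obtain ⟨f, rfl⟩ : ∃ f, e = f + 1 := ⟨e-1, by omega⟩
      have hex : h (f+1+1) ≤ h (f+1) + 2 := by
        by_contra hc2
        have := sum1 3 1 (f+1) (by
          intro t h1t ht
          by_contra hc3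
          have := G2' t h1t (by omega) (f + 1 - t)
          rw [show t + (f + 1 - t) = f + 1 by omega] at this
          omega)
        rw [show 1 + (f+1) = f + 1 + 1 by omega] at this
        omega
      have cb2 := CB 2 f (by omega)
      have hf : h f + 3 ≤ h (f+1) := by omega
      rcases Nat.eq_zero_or_pos f with rfl | hfp
      · simp at *; omega
      have := sum1 3 1 f (by
          intro t h1t ht
          by_contra hc3
          have := G2' t h1t (by omega) (f - t)
          rw [show t + (f - t) = f by omega] at this
          omega)
      rw [show 1 + f = f + 1 by omega] at this
      have := hall2 (f+1) le_rfl
      omega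

variable {K O : Type*} [Field K] [CommRing O] [Algebra K O]

lemma finrank_map_mkQ [FiniteDimensional K O] (P Q : Submodule K O) (h : P ≤ Q) :
    finrank K (Q.map P.mkQ) + finrank K P = finrank K Q := by
  have := LinearMap.finrank_range_add_finrank_ker (P.mkQ ∘ₗ Q.subtype)
  rw [LinearMap.range_comp, Submodule.range_subtype, LinearMap.ker_comp, Submodule.ker_mkQ] at this
  rw [← this]
  congr 1
  exact (LinearEquiv.finrank_eq (Submodule.comapSubtypeEquivOfLe h)).symm

lemma pow_le_succ (V : Submodule K O) (h1 : (1:O) ∈ V) (s : ℕ) : V ^ s ≤ V ^ (s+1) := by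
  rw [pow_succ]
  intro x hx
  simpa using Submodule.mul_mem_mul hx h1

lemma pow_mono' (V : Submodule K O) (h1 : (1:O) ∈ V) : Monotone (fun s => V ^ s) :=
  monotone_nat_of_le_succ (pow_le_succ V h1)

/-- growth from a "Green" element -/
lemma growth_step [FiniteDimensional K O] (V : Submodule K O) (h1 : (1:O) ∈ V) (s : ℕ)
    (x : O) (hxV' : x ∈ V) (hx : V ^ (s+1) ≤ V ^ s ⊔ (V ^ s).map (LinearMap.mulLeft K x)) :
    finrank K ↥(V ^ (s+2)) + finrank K ↥(V ^ s) ≤ 2 * finrank K ↥(V ^ (s+1)) := by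
  have hle : V ^ (s+2) ≤ V ^ (s+1) ⊔ (V ^ (s+1)).map (LinearMap.mulLeft K x) := by
    rw [show s + 2 = (s+1)+1 by ring, pow_succ' V (s+1)]
    refine (mul_le_mul' le_rfl hx).trans ?_
    rw [Submodule.mul_sup]
    refine sup_le_sup (by rw [← pow_succ']) ?_
    rw [Submodule.mul_le]
    rintro a ha _ ⟨b, hb, rfl⟩
    refine ⟨a * b, ?_, ?_⟩
    · rw [pow_succ']; exact Submodule.mul_mem_mul ha hb
    · simp; ring
  set A := V ^ (s+1) with hA
  let f : A →ₗ[K] (O ⧸ A) := A.mkQ ∘ₗ (LinearMap.mulLeft K x) ∘ₗ A.subtype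
  have hf := LinearMap.finrank_range_add_finrank_ker f
  have hxV : (V ^ (s+2)).map A.mkQ ≤ LinearMap.range f := by
    refine (Submodule.map_mono hle).trans ?_
    rw [Submodule.map_sup, Submodule.mkQ_map_self, bot_sup_eq]
    rintro _ ⟨_, ⟨b, hb, rfl⟩, rfl⟩
    exact ⟨⟨b, hb⟩, rfl⟩
  have h2 := finrank_map_mkQ A (V ^ (s+2)) (pow_le_succ V h1 (s+1))
  have h3 := Submodule.finrank_mono hxV
  have hk : (V ^ s).comap A.subtype ≤ LinearMap.ker f := by
    intro a ha
    simp only [f, LinearMap.mem_ker, LinearMap.comp_apply, Submodule.mkQ_apply]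
    rw [Submodule.Quotient.mk_eq_zero]
    have : x * (a : O) ∈ V ^ (s+1) := by
      rw [pow_succ']; exact Submodule.mul_mem_mul hxV' ha
    exact this
  have h4 := Submodule.finrank_mono hk
  have h5 : finrank K ((V ^ s).comap A.subtype) = finrank K ↥(V ^ s) := LinearEquiv.finrank_eq
      (Submodule.comapSubtypeEquivOfLe (pow_le_succ V h1 s : V ^ s ≤ A))
  omega

lemma map_mkQ_le (P Q Q' : Submodule K O) (h : Q.map P.mkQ ≤ Q'.map P.mkQ) : Q ≤ P ⊔ Q' := by
  have := Submodule.comap_mono (f := P.mkQ) h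
  rw [Submodule.comap_map_mkQ, Submodule.comap_map_mkQ] at this
  exact le_sup_right.trans this

/-- span of the images of products -/
lemma pow_succ_map_le (V : Submodule K O) (s : ℕ) {Q : Type*} [AddCommGroup Q] [Module K Q]
    (π : O →ₗ[K] Q) (T : Submodule K Q) (h : ∀ y ∈ V, ∀ c ∈ V ^ s, π (y * c) ∈ T) :
    (V ^ (s+1)).map π ≤ T := by
  rw [Submodule.map_le_iff_le_comap, pow_succ', Submodule.mul_le]
  exact h

lemma map_le_E (V : Submodule K O) (s : ℕ) {Q : Type*} [AddCommGroup Q] [Module K Q]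
    (π : O →ₗ[K] Q) (x : O) (hx : x ∈ V) :
    ((V ^ s).map (LinearMap.mulLeft K x)).map π ≤ (V ^ (s+1)).map π := by
  apply Submodule.map_mono
  rintro _ ⟨b, hb, rfl⟩
  rw [pow_succ']
  exact Submodule.mul_mem_mul hx hb

lemma green1 [FiniteDimensional K O] (V : Submodule K O) (h1 : (1:O) ∈ V) (s : ℕ)
    (hD : finrank K ↥(V ^ (s+1)) ≤ finrank K ↥(V ^ s) + 1) :
    ∃ x ∈ V, V ^ (s+1) ≤ V ^ s ⊔ (V ^ s).map (LinearMap.mulLeft K x) := by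
  have hE := finrank_map_mkQ (V ^ s) (V ^ (s+1)) (pow_le_succ V h1 s)
  by_contra hcon
  push Not at hcon
  have hz : ∀ x ∈ V, ((V ^ s).map (LinearMap.mulLeft K x)).map (V ^ s).mkQ = ⊥ := by
    intro x hx
    by_contra hne
    apply hcon x hx
    apply map_mkQ_le
    refine (Submodule.eq_of_le_of_finrank_le (map_le_E V s _ x hx) ?_).ge
    have := Submodule.one_le_finrank_iff.mpr hne
    omega
  apply hcon 1 h1
  apply map_mkQ_le
  rw [hz 1 h1]
  apply pow_succ_map_le
  intro y hy c hc
  rw [← hz y hy]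
  exact ⟨_, ⟨c, hc, rfl⟩, rfl⟩

lemma green2 [FiniteDimensional K O] (V : Submodule K O) (h1 : (1:O) ∈ V) (s : ℕ)
    (hD : finrank K ↥(V ^ (s+1+1)) ≤ finrank K ↥(V ^ (s+1)) + 2) :
    ∃ x ∈ V, V ^ (s+1+1) ≤ V ^ (s+1) ⊔ (V ^ (s+1)).map (LinearMap.mulLeft K x) := by
  have hE := finrank_map_mkQ (V ^ (s+1)) (V ^ (s+1+1)) (pow_le_succ V h1 (s+1))
  by_contra hcon
  push Not at hcon
  set π := (V ^ (s+1)).mkQ with hπ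
  set T : O → Submodule K (O ⧸ V ^ (s+1)) :=
    fun x => ((V ^ (s+1)).map (LinearMap.mulLeft K x)).map π with hT
  have hmem : ∀ x c, c ∈ V ^ (s+1) → π (x * c) ∈ T x := fun x c hc => ⟨_, ⟨c, hc, rfl⟩, rfl⟩
  have hrk : ∀ x ∈ V, finrank K (T x) ≤ 1 := by
    intro x hx
    by_contra hne
    apply hcon x hx
    apply map_mkQ_le
    refine (Submodule.eq_of_le_of_finrank_le (map_le_E V (s+1) _ x hx) ?_).ge
    change finrank K ((V ^ (s+1+1)).map π) ≤ finrank K (T x)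
    omega
  have star : ∀ x ∈ V, ∀ a ∈ V ^ (s+1), ∀ b ∈ V ^ (s+1), π (x * a) ≠ 0 →
      ∃ c : K, π (x * b) = c • π (x * a) := by
    intro x hx a ha b hb hne
    obtain ⟨v, hv⟩ := finrank_le_one_iff.mp (hrk x hx)
    obtain ⟨c1, hc1⟩ := hv ⟨_, hmem x a ha⟩
    obtain ⟨c2, hc2⟩ := hv ⟨_, hmem x b hb⟩
    have e1 : c1 • (v : O ⧸ V ^ (s+1)) = π (x * a) := congrArg Subtype.val hc1
    have e2 : c2 • (v : O ⧸ V ^ (s+1)) = π (x * b) := congrArg Subtype.val hc2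
    have hc1 : c1 ≠ 0 := by rintro rfl; apply hne; rw [← e1, zero_smul]
    refine ⟨c2 * c1⁻¹, ?_⟩
    rw [← e1, ← e2, smul_smul, mul_assoc, inv_mul_cancel₀ hc1, mul_one]
  -- find product
  obtain ⟨x, hx, u, hu, v, hv, hne⟩ : ∃ x ∈ V, ∃ u ∈ V, ∃ v ∈ V ^ s, π (x * (u * v)) ≠ 0 := by
    by_contra hno
    push Not at hno
    apply hcon 1 h1
    apply map_mkQ_le
    refine le_trans ?_ bot_le
    apply pow_succ_map_le
    intro y hy c hc
    have : V * V ^ s ≤ LinearMap.ker (π ∘ₗ LinearMap.mulLeft K y) := by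
      rw [Submodule.mul_le]
      intro u hu v hv
      exact hno y hy u hu v hv
    exact this (by rw [← pow_succ']; exact hc)
  have hp : u * v ∈ V ^ (s+1) := by rw [pow_succ']; exact Submodule.mul_mem_mul hu hv
  have hyp : ∀ y ∈ V, π (y * (u * v)) ∈ T u := by
    intro y hy
    rw [show y * (u * v) = u * (y * v) by ring]
    apply hmem
    rw [pow_succ']; exact Submodule.mul_mem_mul hy hv
  apply hcon u hu
  apply map_mkQ_le
  apply pow_succ_map_le
  intro y hy c hc
  change π (y * c) ∈ T u
  obtain ⟨l, hl⟩ := star x hx _ hp c hc hne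
  set c' := c - l • (u * v) with hc'
  have hc'm : c' ∈ V ^ (s+1) := Submodule.sub_mem _ hc (Submodule.smul_mem _ _ hp)
  have hxc' : π (x * c') = 0 := by
    rw [hc', mul_sub, map_sub, mul_smul_comm, map_smul, hl, sub_self]
  have hsplit : π (y * c) = π (y * c') + l • π (y * (u * v)) := by
    rw [← map_smul, ← map_add, hc']; congr 1
    rw [mul_sub, mul_smul_comm, sub_add_cancel]
  rw [hsplit]
  refine Submodule.add_mem _ ?_ (Submodule.smul_mem _ _ (hyp y hy))
  by_cases hyc : π (y * c') = 0
  · rw [hyc]; exact Submodule.zero_mem _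
  have hxy : π ((x + y) * c') = π (y * c') := by rw [add_mul, map_add, hxc', zero_add]
  obtain ⟨μ, hμ⟩ := star (x+y) (V.add_mem hx hy) c' hc'm _ hp (by rwa [hxy])
  rw [hxy] at hμ
  by_cases hμ0 : μ = 0
  · rw [hμ0, zero_smul, add_mul, map_add] at hμ
    have hyne : π (y * (u * v)) ≠ 0 := by
      intro h0; rw [h0, add_zero] at hμ; exact hne hμ
    obtain ⟨ν, hν⟩ := star y hy _ hp c' hc'm hyne
    rw [hν]
    exact Submodule.smul_mem _ _ (hyp y hy)
  · have : π (y * c') = μ⁻¹ • π ((x + y) * (u * v)) := by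
      rw [hμ, smul_smul, inv_mul_cancel₀ hμ0, one_smul]
    rw [this]
    exact Submodule.smul_mem _ _ (hyp _ (V.add_mem hx hy))

lemma core_min [IsAlgClosed K] [FiniteDimensional K O] (V : Submodule K O) (h1 : (1:O) ∈ V)
    (hgen : ∃ n, V ^ n = ⊤) (d : ℕ) (hz : finrank K O < 3 * d) (hV : V ^ d ≠ ⊤)
    (hmin : ∀ a : Ideal O, a ≠ ⊥ → V ^ d ⊔ a.restrictScalars K = ⊤) :
    (finrank K V = 2 ∧ d + 2 ≤ finrank K O) ∨
    (finrank K V = 3 ∧ finrank K ↥(V ^ 2) ≤ 5 ∧ 2 * d + 2 ≤ finrank K O) := by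
  have mono := pow_mono' V h1
  have nondeg : ∀ η : O →ₗ[K] K, η ≠ 0 → V ^ d ≤ LinearMap.ker η →
      ∀ f, (∀ g, η (f * g) = 0) → f = 0 := by
    intro η hη hk f hf
    by_contra hf0
    have h2 := hmin (Ideal.span {f}) (by simpa using hf0)
    apply hη
    rw [← LinearMap.ker_eq_top, eq_top_iff, ← h2]
    refine sup_le hk ?_
    intro y hy
    obtain ⟨g, rfl⟩ := Ideal.mem_span_singleton'.mp hy
    rw [LinearMap.mem_ker, mul_comm]; exact hf g
  obtain ⟨η, hη0, hηk⟩ := Submodule.exists_le_ker_of_lt_top _ (lt_top_iff_ne_top.mpr hV)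
  let B : O →ₗ[K] Module.Dual K O := (LinearMap.mul K O).compr₂ η
  have hB : ∀ f g, B f g = η (f * g) := fun f g => rfl
  have hBinj : Function.Injective B := by
    rw [← LinearMap.ker_eq_bot, LinearMap.ker_eq_bot']
    intro f hf
    exact nondeg η hη0 hηk f (fun g => by rw [← hB, hf]; rfl)
  have hBsurj : Function.Surjective B :=
    (LinearMap.injective_iff_surjective_of_finrank_eq_finrank
      (Subspace.dual_finrank_eq).symm).mp hBinj
  have hker : V ^ d = LinearMap.ker η := by
    refine le_antisymm hηk ?_
    intro y hy
    by_contra hyV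
    obtain ⟨η', hη'y, hη'k⟩ := Submodule.exists_le_ker_of_notMem hyV
    obtain ⟨g, hg⟩ := hBsurj η'
    have : Nontrivial O := ⟨⟨y, 0, by rintro rfl; exact hyV (Submodule.zero_mem _)⟩⟩
    obtain ⟨c, hc⟩ := Module.End.exists_eigenvalue (LinearMap.mulLeft K g)
    obtain ⟨f, hf⟩ := hc.exists_hasEigenvector
    refine hf.2 (nondeg (η' - c • η) ?_ ?_ f ?_)
    · intro h0
      apply hη'y
      have := LinearMap.congr_fun h0 y
      simpa [LinearMap.mem_ker.mp hy] using this
    · intro w hw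
      have e1 := hηk hw
      have e2 := hη'k hw
      rw [LinearMap.mem_ker] at *
      simp [e1, e2]
    · intro k
      have hgf : g * f = c • f := hf.apply_eq_smul
      rw [← hg]
      simp only [LinearMap.sub_apply, LinearMap.smul_apply, hB]
      rw [← mul_assoc, hgf, smul_mul_assoc, map_smul, sub_self]
  have hdz : finrank K ↥(V ^ d) + 1 = finrank K O := by
    rw [hker]
    have := LinearMap.finrank_range_add_finrank_ker η
    rw [LinearMap.range_eq_top.mpr (LinearMap.surjective hη0), finrank_top, finrank_self] at this
    omega
  have hstrict : ∀ t, t ≤ d → finrank K ↥(V ^ t) < finrank K ↥(V ^ (t+1)) := by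
    intro t ht
    apply Submodule.finrank_lt_finrank_of_lt
    refine lt_of_le_of_ne (pow_le_succ V h1 t) ?_
    intro heq
    have hst : ∀ k, V ^ (t + k) = V ^ t := by
      intro k
      induction k with
      | zero => rfl
      | succ k ih => rw [← add_assoc, pow_succ, ih, ← pow_succ, ← heq]
    obtain ⟨n, hn⟩ := hgen
    apply hV
    have e1 : V ^ (t + n) = ⊤ := top_le_iff.mp (hn ▸ mono (by omega : n ≤ t + n))
    rw [hst] at e1
    exact top_le_iff.mp (e1 ▸ mono ht)
  have : Nontrivial O := by
    by_contra hnt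
    rw [not_nontrivial_iff_subsingleton] at hnt
    exact hV (Subsingleton.elim _ _)
  have := num (fun t => finrank K ↥(V ^ t)) d (finrank K O) hz ?_ hdz ?_ hstrict ?_ ?_ ?_
  · have e : finrank K ↥(V ^ 1) = finrank K V := by rw [pow_one]
    simpa only [e] using this
  · change finrank K ↥(V ^ 0) = 1
    rw [pow_zero, Submodule.one_eq_span]
    exact finrank_span_singleton one_ne_zero
  · have h3 := hstrict d le_rfl
    have h4 := Submodule.finrank_le (V ^ (d+1))
    change finrank K ↥(V ^ (d+1)) = _
    omega
  · intro s hs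
    obtain ⟨x, hx, hx2⟩ := green1 V h1 s hs
    have := growth_step V h1 s x hx hx2
    change finrank K ↥(V ^ (_)) ≤ finrank K ↥(V ^ (_)) + _
    change finrank K ↥(V ^ (_)) ≤ finrank K ↥(V ^ (_)) + _ at hs
    omega
  · intro s hs1 hs
    obtain ⟨s, rfl⟩ : ∃ r, s = r + 1 := ⟨s - 1, by omega⟩
    obtain ⟨x, hx, hx2⟩ := green2 V h1 s hs
    have := growth_step V h1 (s+1) x hx hx2
    change finrank K ↥(V ^ (_)) ≤ finrank K ↥(V ^ (_)) + _
    change finrank K ↥(V ^ (_)) ≤ finrank K ↥(V ^ (_)) + _ at hs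
    omega
  · intro i j hij
    have hle : (V ^ i).map B ≤ (V ^ j).dualAnnihilator := by
      rintro _ ⟨f, hf, rfl⟩
      rw [Submodule.mem_dualAnnihilator]
      intro g hg
      rw [hB]
      apply hηk
      rw [← hij, pow_add]
      exact Submodule.mul_mem_mul hf hg
    have e1 := Submodule.finrank_mono hle
    rw [← LinearEquiv.finrank_eq (Submodule.equivMapOfInjective B hBinj (V ^ i))] at e1
    have e2 := Subspace.finrank_add_finrank_dualAnnihilator_eq (V ^ j)
    change finrank K ↥(V ^ i) + finrank K ↥(V ^ j) ≤ _
    omega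

lemma core [IsAlgClosed K] [FiniteDimensional K O] (V : Submodule K O) (h1 : (1:O) ∈ V)
    (hgen : ∃ n, V ^ n = ⊤) (d : ℕ) (hz : finrank K O < 3 * d) (hV : V ^ d ≠ ⊤) :
    ∃ a : Ideal O,
    (finrank K (V.map (Ideal.Quotient.mkₐ K a).toLinearMap) = 2 ∧ d + 2 ≤ finrank K (O ⧸ a)) ∨
    (finrank K (V.map (Ideal.Quotient.mkₐ K a).toLinearMap) = 3 ∧
      finrank K ((V ^ 2).map (Ideal.Quotient.mkₐ K a).toLinearMap) ≤ 5 ∧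
      2 * d + 2 ≤ finrank K (O ⧸ a)) := by
  have : IsNoetherianRing O := isNoetherian_of_tower K inferInstance
  obtain ⟨a, ha, hmax⟩ := set_has_maximal_iff_noetherian.mpr (inferInstance : IsNoetherian O O)
    {a : Ideal O | V ^ d ⊔ a.restrictScalars K ≠ ⊤} ⟨⊥, by simpa using hV⟩
  refine ⟨a, ?_⟩
  set p := (Ideal.Quotient.mkₐ K a) with hp
  have hsurj : Function.Surjective p := Ideal.Quotient.mkₐ_surjective K a
  have hpow : ∀ n, (V.map p.toLinearMap) ^ n = (V ^ n).map p.toLinearMap := fun n =>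
    (Submodule.map_pow V p n).symm
  have hkerp : LinearMap.ker p.toLinearMap = a.restrictScalars K := by
    ext x; simp [hp, Ideal.Quotient.eq_zero_iff_mem]
  have hcm : ∀ (W : Submodule K O), W.map p.toLinearMap = ⊤ → W ⊔ a.restrictScalars K = ⊤ := by
    intro W hW
    rw [← hkerp, ← Submodule.comap_map_eq, hW, Submodule.comap_top]
  have := core_min (V.map p.toLinearMap) ⟨1, h1, by simp⟩ ?_ d ?_ ?_ ?_
  · rw [hpow] at this; exact this
  · obtain ⟨n, hn⟩ := hgen
    refine ⟨n, ?_⟩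
    rw [hpow, hn, Submodule.map_top, LinearMap.range_eq_top]
    exact hsurj
  · refine lt_of_le_of_lt ?_ hz
    exact LinearMap.finrank_le_finrank_of_surjective (f := p.toLinearMap) hsurj
  · rw [hpow]
    intro h
    exact ha (hcm _ h)
  · intro b hb
    by_contra hne
    have hb2 : V ^ d ⊔ (b.comap p).restrictScalars K ≠ ⊤ := by
      intro htop
      apply hne
      have h3 := congrArg (Submodule.map p.toLinearMap) htop
      rw [Submodule.map_sup, Submodule.map_top, LinearMap.range_eq_top.mpr hsurj, ← hpow] at h3
      rw [eq_top_iff, ← h3]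
      refine sup_le_sup le_rfl ?_
      rintro _ ⟨y, hy, rfl⟩
      exact hy
    refine hmax _ hb2 ?_
    refine lt_of_le_of_ne ?_ ?_
    · intro x hx
      rw [Ideal.mem_comap]
      have : p x = 0 := Ideal.Quotient.eq_zero_iff_mem.mpr hx
      rw [this]; exact b.zero_mem
    · intro heq
      apply hb
      rw [eq_bot_iff]
      intro y hy
      obtain ⟨x, rfl⟩ := hsurj y
      have : x ∈ a := by rw [heq]; exact hy
      exact Ideal.Quotient.eq_zero_iff_mem.mpr this

end Core

namespace Geo
open Module MvPolynomial

instance fdHd {σ K : Type*} [Field K] [Finite σ] (t : ℕ) :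
    FiniteDimensional K (homogeneousSubmodule σ K t) :=
  Module.Finite.iff_fg.mpr (homogeneousSubmodule_fg σ K t)

lemma aeval_scale {σ K S : Type*} [Field K] [CommRing S] [Algebra K S]
    {f : MvPolynomial σ K} {n : ℕ} (hf : f.IsHomogeneous n) (c : S) (g : σ → S) :
    aeval (fun i => c * g i) f = c ^ n * aeval g f := by
  classical
  rw [aeval_def, aeval_def, eval₂_eq, eval₂_eq, Finset.mul_sum]
  refine Finset.sum_congr rfl fun d hd => ?_
  have h1 : d.degree = n := (hf.degree_eq_sum_deg_support hd).symm
  simp only [mul_pow, Finset.prod_mul_distrib, Finset.prod_pow_eq_pow_sum]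
  rw [show ∑ i ∈ d.support, d i = n from h1]
  ring

lemma finrank_map_le_of_ker {K M N N' : Type*} [Field K] [AddCommGroup M] [Module K M]
    [AddCommGroup N] [Module K N] [AddCommGroup N'] [Module K N']
    (S : Submodule K M) [FiniteDimensional K S] (f : M →ₗ[K] N) (g : M →ₗ[K] N')
    (h : ∀ x ∈ S, g x = 0 → f x = 0) : finrank K (S.map f) ≤ finrank K (S.map g) := by
  have h1 := LinearMap.finrank_range_add_finrank_ker (f ∘ₗ S.subtype)
  have h2 := LinearMap.finrank_range_add_finrank_ker (g ∘ₗ S.subtype)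
  rw [LinearMap.range_comp, Submodule.range_subtype] at h1 h2
  have h3 : LinearMap.ker (g ∘ₗ S.subtype) ≤ LinearMap.ker (f ∘ₗ S.subtype) := by
    intro x hx
    exact h x x.2 hx
  have h4 := Submodule.finrank_mono h3
  omega

lemma finrank_hom (K : Type*) [Field K] (r t : ℕ) :
    finrank K (homogeneousSubmodule (Fin (r+1)) K t) = (r + t).choose t := by
  classical
  have e : homogeneousSubmodule (Fin (r+1)) K t = restrictSupport K {d | d.degree = t} :=
    homogeneousSubmodule_eq_finsupp_supported _ _ _
  rw [e, finrank_eq_nat_card_basis (basisRestrictSupport K _)]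
  have h2 : {d : Fin (r+1) →₀ ℕ | d.degree = t} =
      ((Finset.univ : Finset (Fin (r+1))).finsuppAntidiag t : Set _) := by
    ext d
    simp [Finset.mem_finsuppAntidiag, Finsupp.degree_eq_sum]
  rw [h2, Nat.card_coe_set_eq, Set.ncard_coe_finset, Finset.card_finsuppAntidiag_nat_eq_choose]
  simp only [Finset.card_univ, Fintype.card_fin]
  congr 1
  omega

section
variable {K : Type} [Field K] {m : ℕ}

lemma exists_nzd [Infinite K] (I : Ideal (PR K m)) (hI : IsSatI I) :
    ∃ l : PR K m, l.IsHomogeneous 1 ∧ ∀ f, l * f ∈ I → f ∈ I := by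
  classical
  have hfin := associatedPrimes.finite (PR K m) (PR K m ⧸ I)
  let sub : Ideal (PR K m) → Submodule K (Hd K m 1) :=
    fun P => (P.restrictScalars K).comap (Hd K m 1).subtype
  have hne := Subspace.biUnion_ne_univ_of_top_notMem (s := hfin.toFinset.image sub) (by
    intro hmem
    obtain ⟨P, hP, hPtop⟩ := Finset.mem_image.mp hmem
    rw [Set.Finite.mem_toFinset, AssociatedPrimes.mem_iff, isAssociatedPrime_iff] at hP
    obtain ⟨hprime, x, hx⟩ := hP
    obtain ⟨f, rfl⟩ := Ideal.Quotient.mk_surjective x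
    have hf : f ∈ I := by
      apply hI
      intro i
      have h1 : (⟨X i, isHomogeneous_X K i⟩ : Hd K m 1) ∈ sub P := by rw [hPtop]; trivial
      have h2 : (X i : PR K m) ∈ P := h1
      rw [hx, Submodule.mem_colon_singleton] at h2
      rw [← Ideal.Quotient.eq_zero_iff_mem]
      have h2' : (X i : PR K m) • Ideal.Quotient.mk I f = 0 := by simpa using h2
      exact h2'
    apply hprime.ne_top
    rw [hx, Ideal.Quotient.eq_zero_iff_mem.mpr hf]
    simp)
  rw [Ne, Set.eq_univ_iff_forall] at hne
  push Not at hne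
  obtain ⟨l, hl⟩ := hne
  refine ⟨l, l.2, ?_⟩
  intro f hf
  by_contra hfI
  have h3 : (l : PR K m) ∈ ⋃ p ∈ associatedPrimes (PR K m) (PR K m ⧸ I), (p : Set (PR K m)) := by
    rw [biUnion_associatedPrimes_eq_zero_divisors]
    refine ⟨Ideal.Quotient.mk I f, ?_, ?_⟩
    · rwa [Ne, Ideal.Quotient.eq_zero_iff_mem]
    · rw [← Ideal.Quotient.eq_zero_iff_mem] at hf
      rw [← hf]; rfl
  simp only [Set.mem_iUnion] at h3
  obtain ⟨P, hP, hlP⟩ := h3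
  apply hl
  simp only [Set.mem_iUnion]
  exact ⟨sub P, Finset.mem_image.mpr ⟨P, by simpa using hP, rfl⟩, hlP⟩

lemma exists_dehom [Infinite K] (I : Ideal (PR K m)) (hI : IsSatI I) :
    ∃ (A : Ideal (PR K m)) (l : PR K m), l.IsHomogeneous 1 ∧ Ideal.Quotient.mkₐ K A l = 1 ∧
      ∀ t f, f.IsHomogeneous t → (f ∈ A ↔ f ∈ I) := by
  obtain ⟨l, hl, hnz⟩ := exists_nzd I hI
  let lb : PR K m ⧸ I := Ideal.Quotient.mk I l
  let L := Localization.Away lb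
  let α : PR K m →ₐ[K] L :=
    (Algebra.algHom K (PR K m ⧸ I) L).comp (Ideal.Quotient.mkₐ K I)
  let u : L := IsLocalization.Away.invSelf lb
  have hu : u * α l = 1 := by
    rw [mul_comm]; exact IsLocalization.Away.mul_invSelf lb
  let θ : PR K m →ₐ[K] L := aeval (fun i => u * α (X i))
  have hα : ∀ f, aeval (fun i => α (X i)) f = α f := by
    intro f
    exact congrArg (fun g : PR K m →ₐ[K] L => g f) (aeval_unique α).symm
  have hθ : ∀ t f, f.IsHomogeneous t → θ f = u ^ t * α f := by
    intro t f hf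
    rw [← hα f]
    exact aeval_scale hf u _
  refine ⟨RingHom.ker θ, l, hl, ?_, ?_⟩
  · rw [← map_one (Ideal.Quotient.mkₐ K (RingHom.ker θ)), ← sub_eq_zero, ← map_sub]
    apply Ideal.Quotient.eq_zero_iff_mem.mpr
    rw [RingHom.mem_ker, map_sub, map_one, hθ 1 l hl, pow_one, hu, sub_self]
  · intro t f hf
    rw [RingHom.mem_ker, hθ t f hf]
    constructor
    · intro h0
      have h1 : α f = 0 := by
        have : (α l) ^ t * (u ^ t * α f) = 0 := by rw [h0, mul_zero]
        rw [← mul_assoc, ← mul_pow, mul_comm (α l), hu, one_pow, one_mul] at this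
        exact this
      have h2 : algebraMap (PR K m ⧸ I) L (Ideal.Quotient.mk I f) = 0 := h1
      rw [IsLocalization.map_eq_zero_iff (Submonoid.powers lb)] at h2
      obtain ⟨⟨_, n, rfl⟩, hn⟩ := h2
      have h3 : l ^ n * f ∈ I := by
        rw [← Ideal.Quotient.eq_zero_iff_mem, map_mul, map_pow]; exact hn
      clear hn
      induction n with
      | zero => simpa using h3
      | succ n ih => exact ih (hnz _ (by rw [← mul_assoc, ← pow_succ']; exact h3))
    · intro hfI
      have : α f = algebraMap (PR K m ⧸ I) L (Ideal.Quotient.mk I f) := rfl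
      rw [this, Ideal.Quotient.eq_zero_iff_mem.mpr hfI, map_zero, mul_zero]

/-- restriction to the span of the vectors `w j` -/
noncomputable def rho {r : ℕ} (w : Fin r → (Fin (m+1) → K)) : PR K m →ₐ[K] MvPolynomial (Fin r) K :=
  aeval (fun i => ∑ j, C (w j i) * X j)

lemma rho_hom {r : ℕ} (w : Fin r → (Fin (m+1) → K)) {f : PR K m} {t : ℕ}
    (hf : f.IsHomogeneous t) : (rho w f).IsHomogeneous t := by
  have := IsHomogeneous.aeval hf (fun i => ∑ j, C (w j i) * X j : Fin (m+1) → MvPolynomial (Fin r) K)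
    (n := 1) (fun i => IsHomogeneous.sum _ _ _ (fun j _ => isHomogeneous_C_mul_X _ _))
  rwa [one_mul] at this

lemma eval_rho {r : ℕ} (w : Fin r → (Fin (m+1) → K)) (f : PR K m) (y : Fin r → K) :
    eval y (rho w f) = eval (∑ j, y j • w j) f := by
  have : (aeval y : MvPolynomial (Fin r) K →ₐ[K] K).comp (rho w)
      = aeval (∑ j, y j • w j) := by
    apply algHom_ext
    intro i
    simp [rho, mul_comm]
  exact congrArg (fun g : PR K m →ₐ[K] K => g f) this

lemma rho_zero_mem {r : ℕ} (w : Fin r → (Fin (m+1) → K)) {f : PR K m} {t : ℕ}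
    (hf : f.IsHomogeneous t) (h0 : rho w f = 0) :
    f ∈ idealOfSet {a : Pm K m | a.submodule ≤ Submodule.span K (Set.range w)} := by
  apply Ideal.subset_span
  refine ⟨⟨t, hf⟩, ?_⟩
  intro a ha
  have h1 : a.rep ∈ Submodule.span K (Set.range w) := by
    apply ha
    rw [Projectivization.submodule_eq]
    exact Submodule.mem_span_singleton_self _
  obtain ⟨y, hy⟩ := (Submodule.mem_span_range_iff_exists_fun K).mp h1
  rw [← hy, ← eval_rho, h0, map_zero]

lemma rho_mem_zero [Infinite K] {r : ℕ} (w : Fin (r+1) → (Fin (m+1) → K))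
    (hw : LinearIndependent K w) {f : PR K m}
    (hf : f ∈ idealOfSet {a : Pm K m | a.submodule ≤ Submodule.span K (Set.range w)}) :
    rho w f = 0 := by
  have : idealOfSet {a : Pm K m | a.submodule ≤ Submodule.span K (Set.range w)}
      ≤ RingHom.ker (rho w) := by
    rw [idealOfSet, Ideal.span_le]
    rintro g ⟨⟨n, hg⟩, hv⟩
    rw [SetLike.mem_coe, RingHom.mem_ker]
    have h2 : rho w g * X 0 = 0 := by
      apply MvPolynomial.funext
      intro y
      rw [map_mul, eval_rho, eval_X, map_zero]
      by_cases hy : y 0 = 0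
      · rw [hy, mul_zero]
      have hne : (∑ j, y j • w j) ≠ 0 := by
        intro h0
        exact hy (Fintype.linearIndependent_iff.mp hw y h0 0)
      obtain ⟨a, ha⟩ := Projectivization.exists_smul_eq_mk_rep K _ hne
      have h3 := hv (Projectivization.mk K _ hne) (by
        rw [Set.mem_ofPred_eq, Projectivization.submodule_mk, Submodule.span_singleton_le_iff_mem]
        exact Submodule.sum_mem _ fun j _ => Submodule.smul_mem _ _
          (Submodule.subset_span ⟨j, rfl⟩))
      rw [← ha] at h3
      have h4 := aeval_scale hg (a : K) (∑ j, y j • w j)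
      have h5 : aeval (fun i => (a : K) * (∑ j, y j • w j) i) g = 0 := h3
      rw [h5] at h4
      have h6 := (mul_eq_zero.mp h4.symm).resolve_left (pow_ne_zero _ a.ne_zero)
      have h7 : eval (∑ j, y j • w j) g = 0 := h6
      rw [h7, zero_mul]
    exact (mul_eq_zero.mp h2).resolve_right (X_ne_zero 0)
  exact this hf

lemma rho_surj {r : ℕ} (w : Fin r → (Fin (m+1) → K))
    (hw : LinearIndependent K w) (t : ℕ) :
    (Hd K m t).map (rho w).toLinearMap = homogeneousSubmodule (Fin r) K t := by
  have e1 : Hd K m t = Hd K m 1 ^ t := (homogeneousSubmodule_one_pow _ t).symm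
  have e2 : homogeneousSubmodule (Fin r) K t = homogeneousSubmodule (Fin r) K 1 ^ t :=
    (homogeneousSubmodule_one_pow _ t).symm
  rw [e1, e2, Submodule.map_pow]
  congr 1
  apply le_antisymm
  · rintro _ ⟨f, hf, rfl⟩
    exact rho_hom w hf
  · rw [homogeneousSubmodule_one_eq_span_X, Submodule.span_le]
    rintro _ ⟨j, rfl⟩
    obtain ⟨g, hg⟩ := LinearMap.exists_leftInverse_of_injective
      (Fintype.linearCombination K w) (by
        rw [LinearMap.ker_eq_bot]
        exact hw.fintypeLinearCombination_injective)
    have hgw : ∀ k, g (w k) = Pi.single k 1 := by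
      intro k
      have := LinearMap.congr_fun hg (Pi.single k 1)
      simpa using this
    refine ⟨∑ i, C (g (Pi.single i 1) j) * X i, ?_, ?_⟩
    · exact IsHomogeneous.sum _ _ _ (fun j _ => isHomogeneous_C_mul_X _ _)
    · have key : ∀ k, ∑ i, g (Pi.single i 1) j * w k i = if k = j then 1 else 0 := by
        intro k
        have h1 : g (w k) = ∑ i, w k i • g (Pi.single i 1) := by
          conv_lhs => rw [pi_eq_sum_univ' (w k)]
          simp [map_sum]
        have h2 := congrFun h1 j
        rw [hgw k] at h2
        simp only [Finset.sum_apply, Pi.smul_apply, smul_eq_mul] at h2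
        rw [Pi.single_apply] at h2
        rw [Finset.sum_congr rfl (fun i _ => mul_comm _ _), ← h2]
        simp [eq_comm]
      simp only [rho, AlgHom.toLinearMap_apply, map_sum, map_mul, aeval_X, algHom_C, algebraMap_eq]
      simp only [Finset.mul_sum]
      rw [Finset.sum_comm]
      simp only [← mul_assoc, ← C_mul, ← Finset.sum_mul, ← map_sum, key]
      simp

end
end Geo

namespace Geo
open Module MvPolynomial

section
variable {K : Type} [Field K] {m : ℕ}

lemma psi_pow (A : Ideal (PR K m)) (t : ℕ) :
    ((Hd K m 1).map (Ideal.Quotient.mkₐ K A).toLinearMap) ^ t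
      = (Hd K m t).map (Ideal.Quotient.mkₐ K A).toLinearMap := by
  have e1 : Hd K m t = Hd K m 1 ^ t := (homogeneousSubmodule_one_pow _ t).symm
  rw [e1, Submodule.map_pow]

lemma hilbQ_eq (I A : Ideal (PR K m)) (h : ∀ t f, f.IsHomogeneous t → (f ∈ A ↔ f ∈ I)) (t : ℕ) :
    hilbQ I t = finrank K ((Hd K m t).map (Ideal.Quotient.mkₐ K A).toLinearMap) := by
  rw [hilbQ]
  apply le_antisymm
  · apply finrank_map_le_of_ker
    intro x hx h0
    exact Ideal.Quotient.eq_zero_iff_mem.mpr ((h t x hx).mp (Ideal.Quotient.eq_zero_iff_mem.mp h0))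
  · apply finrank_map_le_of_ker
    intro x hx h0
    exact Ideal.Quotient.eq_zero_iff_mem.mpr ((h t x hx).mpr (Ideal.Quotient.eq_zero_iff_mem.mp h0))

lemma hilbQ_anti {I J : Ideal (PR K m)} (h : I ≤ J) (t : ℕ) : hilbQ J t ≤ hilbQ I t := by
  apply finrank_map_le_of_ker
  intro x hx h0
  exact Ideal.Quotient.eq_zero_iff_mem.mpr (h (Ideal.Quotient.eq_zero_iff_mem.mp h0))

lemma setup (I A : Ideal (PR K m)) (h : ∀ t f, f.IsHomogeneous t → (f ∈ A ↔ f ∈ I))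
    (l : PR K m) (hl : l.IsHomogeneous 1) (hl1 : Ideal.Quotient.mkₐ K A l = 1)
    (hzd : IsZeroDimI I) :
    (1 : PR K m ⧸ A) ∈ (Hd K m 1).map (Ideal.Quotient.mkₐ K A).toLinearMap ∧
    FiniteDimensional K (PR K m ⧸ A) ∧
    (∃ n, (Hd K m n).map (Ideal.Quotient.mkₐ K A).toLinearMap = ⊤) := by
  set V := (Hd K m 1).map (Ideal.Quotient.mkₐ K A).toLinearMap with hV
  have h1 : (1 : PR K m ⧸ A) ∈ V := ⟨l, hl, hl1⟩
  have hmono := Core.pow_mono' V h1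
  have hfd : ∀ t, FiniteDimensional K (V ^ t : Submodule K (PR K m ⧸ A)) := by
    intro t; rw [hV, psi_pow]; infer_instance
  obtain ⟨c, hc⟩ := hzd
  have hb : ∀ t, finrank K (V ^ t : Submodule K (PR K m ⧸ A)) ≤ c := by
    intro t; rw [hV, psi_pow, ← hilbQ_eq I A h]; exact hc t
  have hbdd : BddAbove (Set.range fun t => finrank K (V ^ t : Submodule K (PR K m ⧸ A))) :=
    ⟨c, by rintro _ ⟨t, rfl⟩; exact hb t⟩
  obtain ⟨n, hn⟩ : ∃ n, ∀ t, finrank K (V ^ t : Submodule K (PR K m ⧸ A)) ≤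
      finrank K (V ^ n : Submodule K (PR K m ⧸ A)) := by
    obtain ⟨n, hn⟩ := Nat.sSup_mem (Set.range_nonempty _) hbdd
    exact ⟨n, fun t => by simp only at hn; rw [hn]; exact le_csSup hbdd ⟨t, rfl⟩⟩
  have hst : ∀ t, V ^ t ≤ V ^ n := by
    intro t
    have h2 : V ^ n ≤ V ^ (max n t) := hmono (le_max_left _ _)
    have h3 : V ^ t ≤ V ^ (max n t) := hmono (le_max_right _ _)
    have := hfd (max n t)
    have h4 := Submodule.eq_of_le_of_finrank_le h2 (hn _)
    rw [h4]; exact h3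
  have htop : V ^ n = ⊤ := by
    rw [eq_top_iff]
    rintro x -
    obtain ⟨f, rfl⟩ := Ideal.Quotient.mk_surjective x
    rw [← sum_homogeneousComponent f, map_sum]
    apply Submodule.sum_mem
    intro i _
    apply hst i
    rw [hV, psi_pow]
    exact ⟨_, homogeneousComponent_isHomogeneous i f, rfl⟩
  refine ⟨h1, ?_, n, ?_⟩
  · have := hfd n
    rw [htop] at this
    exact Module.finite_def.mpr (Module.Finite.iff_fg.mp this)
  · rw [← psi_pow]; exact htop

lemma idealDeg_eq (I A : Ideal (PR K m)) (h : ∀ t f, f.IsHomogeneous t → (f ∈ A ↔ f ∈ I))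
    (h1 : (1 : PR K m ⧸ A) ∈ (Hd K m 1).map (Ideal.Quotient.mkₐ K A).toLinearMap)
    (n : ℕ) (hn : (Hd K m n).map (Ideal.Quotient.mkₐ K A).toLinearMap = ⊤) :
    idealDeg I = finrank K (PR K m ⧸ A) := by
  rw [idealDeg]
  have : (fun t => hilbQ I t) =ᶠ[Filter.atTop] fun _ => finrank K (PR K m ⧸ A) := by
    filter_upwards [Filter.eventually_ge_atTop n] with t ht
    rw [hilbQ_eq I A h]
    have h2 := Core.pow_mono' _ h1 ht
    simp only [psi_pow] at h2
    rw [hn, top_le_iff] at h2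
    rw [h2, finrank_top]
  rw [Filter.limsup_congr this, Filter.limsup_const]

lemma idealDeg_le (I A J : Ideal (PR K m)) (h : ∀ t f, f.IsHomogeneous t → (f ∈ A ↔ f ∈ I))
    (l : PR K m) (hl : l.IsHomogeneous 1) (hl1 : Ideal.Quotient.mkₐ K A l = 1)
    (d : ℕ) (hd : (Hd K m d).map (Ideal.Quotient.mkₐ K A).toLinearMap = ⊤) (hIJ : I ≤ J) :
    idealDeg J ≤ hilbQ J d := by
  apply Filter.limsup_le_of_le
  · exact Filter.isCobounded_le_of_bot
  filter_upwards [Filter.eventually_ge_atTop d] with t ht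
  rw [hilbQ, hilbQ]
  have hle : (Hd K m t).map (Ideal.Quotient.mkₐ K J).toLinearMap ≤
      ((Hd K m d).map (Ideal.Quotient.mkₐ K J).toLinearMap).map
        (LinearMap.mulLeft K (Ideal.Quotient.mkₐ K J (l ^ (t - d)))) := by
    rintro _ ⟨f, hf, rfl⟩
    have h3 : Ideal.Quotient.mkₐ K A f ∈ (Hd K m d).map (Ideal.Quotient.mkₐ K A).toLinearMap := by
      rw [hd]; trivial
    obtain ⟨g, hg, hgf⟩ := h3
    refine ⟨_, ⟨g, hg, rfl⟩, ?_⟩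
    have h5 : (l ^ (t - d) * g).IsHomogeneous t := by
      have := (hl.pow (t - d)).mul hg
      rwa [one_mul, Nat.sub_add_cancel ht] at this
    have h4 : l ^ (t - d) * g - f ∈ A := by
      apply Ideal.Quotient.eq_zero_iff_mem.mp
      change Ideal.Quotient.mkₐ K A _ = 0
      rw [map_sub, map_mul, map_pow, hl1, one_pow, one_mul, sub_eq_zero]
      exact hgf
    have h6 := hIJ ((h t _ (h5.sub hf)).mp h4)
    change Ideal.Quotient.mkₐ K J (l ^ (t - d)) * Ideal.Quotient.mkₐ K J g = Ideal.Quotient.mkₐ K J f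
    rw [← map_mul]
    exact Ideal.Quotient.eq.mpr h6
  exact (Submodule.finrank_mono hle).trans (Submodule.finrank_map_le _ _)

lemma hilbQ_line (w : Fin 2 → (Fin (m+1) → K)) (J : Ideal (PR K m))
    (hJ : idealOfSet {a : Pm K m | a.submodule ≤ Submodule.span K (Set.range w)} ≤ J) (d : ℕ) :
    hilbQ J d ≤ d + 1 := by
  have h1 : hilbQ J d ≤ finrank K ((Hd K m d).map (rho w).toLinearMap) := by
    apply finrank_map_le_of_ker
    intro x hx h0
    exact Ideal.Quotient.eq_zero_iff_mem.mpr (hJ (rho_zero_mem w hx h0))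
  have h2 : (Hd K m d).map (rho w).toLinearMap ≤ homogeneousSubmodule (Fin (1+1)) K d := by
    rintro _ ⟨f, hf, rfl⟩
    exact rho_hom w hf
  have h3 := Submodule.finrank_mono h2
  rw [finrank_hom, add_comm 1 d, Nat.choose_succ_self_right] at h3
  omega

lemma hilbQ_conic (w : Fin 3 → (Fin (m+1) → K)) (hw : LinearIndependent K w) (J : Ideal (PR K m))
    (hJ : idealOfSet {a : Pm K m | a.submodule ≤ Submodule.span K (Set.range w)} ≤ J)
    (q : PR K m) (hq : q.IsHomogeneous 2) (hqJ : q ∈ J)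
    (hq0 : q ∉ idealOfSet {a : Pm K m | a.submodule ≤ Submodule.span K (Set.range w)})
    (d : ℕ) (hd1 : 1 ≤ d) :
    hilbQ J d ≤ 2 * d + 1 := by
  have hρ : ∀ t (x : PR K m), x.IsHomogeneous t → rho w x = 0 → x ∈ J :=
    fun t x hx h0 => hJ (rho_zero_mem w hx h0)
  have hle : (Hd K m d).map (rho w).toLinearMap ≤ homogeneousSubmodule (Fin (2+1)) K d := by
    rintro _ ⟨f, hf, rfl⟩
    exact rho_hom w hf
  obtain rfl | hd2 : d = 1 ∨ 2 ≤ d := by omega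
  · have h1 : hilbQ J 1 ≤ finrank K ((Hd K m 1).map (rho w).toLinearMap) := by
      apply finrank_map_le_of_ker
      intro x hx h0
      exact Ideal.Quotient.eq_zero_iff_mem.mpr (hρ _ _ hx h0)
    have h3 := Submodule.finrank_mono hle
    rw [finrank_hom] at h3
    simp at h3
    omega
  · have hqb : rho w q ≠ 0 := fun h0 => hq0 (rho_zero_mem w hq h0)
    obtain ⟨e, rfl⟩ := Nat.exists_eq_add_of_le' hd2
    let H := homogeneousSubmodule (Fin (2+1)) K
    let P : Submodule K (MvPolynomial (Fin 3) K) := (H e).map (LinearMap.mulLeft K (rho w q))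
    have hPH : P ≤ H (e + 2) := by
      rintro _ ⟨f, hf, rfl⟩
      have := (rho_hom w hq).mul (show f.IsHomogeneous e from hf)
      rw [add_comm 2 e] at this
      exact this
    have hPdim : finrank K P = (2 + e).choose e := by
      rw [← finrank_hom K 2 e]
      apply (LinearEquiv.finrank_eq (Submodule.equivMapOfInjective _ _ _)).symm
      intro a b hab
      exact mul_left_cancel₀ hqb hab
    have h1 : hilbQ J (e+2) ≤ finrank K ((Hd K m (e+2)).map (P.mkQ ∘ₗ (rho w).toLinearMap)) := by
      apply finrank_map_le_of_ker
      intro x hx h0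
      have h0' : rho w x ∈ P := (Submodule.Quotient.mk_eq_zero P).mp h0
      obtain ⟨f, hf, hfx⟩ := h0'
      have hf' : f ∈ (Hd K m e).map (rho w).toLinearMap := by rw [rho_surj w hw]; exact hf
      obtain ⟨g, hg, rfl⟩ := hf'
      have h5 : (q * g).IsHomogeneous (e + 2) := by
        rw [add_comm e 2]; exact hq.mul hg
      have h6 : x - q * g ∈ J := by
        apply hρ (e+2) _ (hx.sub h5)
        rw [map_sub, map_mul, sub_eq_zero]; exact hfx.symm
      have h7 : x ∈ J := by
        have := J.add_mem h6 (J.mul_mem_right g hqJ)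
        simpa using this
      exact Ideal.Quotient.eq_zero_iff_mem.mpr h7
    have h2 : finrank K ((Hd K m (e+2)).map (P.mkQ ∘ₗ (rho w).toLinearMap)) + finrank K P ≤
        (2 + (e + 2)).choose (e + 2) := by
      rw [Submodule.map_comp, ← finrank_hom K 2 (e+2)]
      have h3 := LinearMap.finrank_range_add_finrank_ker (P.mkQ ∘ₗ (H (e+2)).subtype)
      rw [LinearMap.range_comp, Submodule.range_subtype] at h3
      have h4 := Submodule.finrank_mono (Submodule.map_mono (f := P.mkQ) hle)
      have h5 : finrank K P ≤ finrank K (LinearMap.ker (P.mkQ ∘ₗ (H (e+2)).subtype)) := by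
        have h6 : P.comap (H (e+2)).subtype ≤ LinearMap.ker (P.mkQ ∘ₗ (H (e+2)).subtype) := by
          intro x hx
          exact (Submodule.Quotient.mk_eq_zero P).mpr hx
        rw [← (Submodule.comapSubtypeEquivOfLe hPH).finrank_eq]
        exact Submodule.finrank_mono h6
      change _ + _ = finrank K (homogeneousSubmodule (Fin (2+1)) K (e+2)) at h3
      change _ ≤ finrank K ((H (e+2)).map P.mkQ) at h4
      omega
    rw [hPdim] at h2
    have c1 : (2 + e).choose e = (e + 2) * (e + 1) / 2 := by
      rw [add_comm 2 e, Nat.choose_symm_add, Nat.choose_two_right]; rfl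
    have c2 : (2 + (e+2)).choose (e+2) = (e + 4) * (e + 3) / 2 := by
      rw [add_comm 2 (e+2), Nat.choose_symm_add, Nat.choose_two_right]; rfl
    have c3 : (e + 4) * (e + 3) = (e + 2) * (e + 1) + 2 * (2 * e + 5) := by ring
    rw [c1, c2, c3] at h2
    omega
end
end Geo

namespace Geo
open Module MvPolynomial

section
variable {K : Type} [Field K] {m : ℕ}

lemma exists_coords {O : Type} [CommRing O] [Algebra K O]
    (χ : PR K m →ₐ[K] O) (r : ℕ) (hr : finrank K ((Hd K m 1).map χ.toLinearMap) = r) :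
    ∃ (b : Fin r → O) (w : Fin r → (Fin (m+1) → K)), LinearIndependent K w ∧
      (∀ f, χ f = aeval b (rho w f)) ∧ ∀ j, b j ∈ (Hd K m 1).map χ.toLinearMap := by
  let b := finBasisOfFinrankEq K _ hr
  have hx : ∀ i, χ (X i) ∈ (Hd K m 1).map χ.toLinearMap := fun i => ⟨X i, isHomogeneous_X K i, rfl⟩
  let w : Fin r → (Fin (m+1) → K) := fun j i => b.repr ⟨χ (X i), hx i⟩ j
  refine ⟨fun j => (b j : O), w, ?_, ?_, fun j => (b j).2⟩
  · rw [Fintype.linearIndependent_iff]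
    intro c hc k
    let φ : (Hd K m 1).map χ.toLinearMap →ₗ[K] K := ∑ j, c j • b.coord j
    have hφ : ∀ i, φ ⟨χ (X i), hx i⟩ = 0 := by
      intro i
      have := congrFun hc i
      simpa [φ, w] using this
    obtain ⟨f, hf, hfb⟩ := (b k).2
    have hf2 : f ∈ Submodule.span K (Set.range (X : Fin (m+1) → PR K m)) := by
      rw [← homogeneousSubmodule_one_eq_span_X]; exact hf
    obtain ⟨a, ha⟩ := (Submodule.mem_span_range_iff_exists_fun K).mp hf2
    have hbk : b k = ∑ i, a i • (⟨χ (X i), hx i⟩ : (Hd K m 1).map χ.toLinearMap) := by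
      apply Subtype.ext
      rw [← hfb, ← ha]
      simp
    have h1 : φ (b k) = 0 := by
      rw [hbk, map_sum]
      exact Finset.sum_eq_zero fun i _ => by rw [map_smul, hφ, smul_zero]
    have h2 : φ (b k) = c k := by
      simp [φ, Finsupp.single_apply]
    rw [← h2, h1]
  · intro f
    have : χ = (aeval fun j => (b j : O)).comp (rho w) := by
      apply algHom_ext
      intro i
      have h1 := congrArg Subtype.val (b.sum_repr ⟨χ (X i), hx i⟩)
      simp only [AlgHom.comp_apply, rho, aeval_X, map_sum, map_mul, algHom_C]
      refine Eq.trans h1.symm ?_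
      rw [Submodule.coe_sum]
      exact Finset.sum_congr rfl fun j _ => Algebra.smul_def _ _
    exact congrArg (fun g : PR K m →ₐ[K] O => g f) this

lemma exists_homogKer {O : Type} [CommRing O] [Algebra K O]
    (χ : PR K m →ₐ[K] O) (l : PR K m) (hl : l.IsHomogeneous 1) (hl1 : χ l = 1) :
    ∃ J : Ideal (PR K m), IsHomogI J ∧ IsSatI J ∧
      ∀ f, f ∈ J ↔ ∀ n, χ (homogeneousComponent n f) = 0 := by
  classical
  let Θ : PR K m →ₐ[K] Polynomial O := aeval (fun i => Polynomial.X * Polynomial.C (χ (X i)))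
  have hχ : ∀ f, aeval (fun i => Polynomial.C (χ (X i))) f = Polynomial.C (χ f) := by
    intro f
    have : (aeval (fun i => Polynomial.C (χ (X i))) : PR K m →ₐ[K] Polynomial O)
        = ((Polynomial.CAlgHom (R := O) (A := O)).restrictScalars K).comp χ := by
      apply algHom_ext
      intro i
      simp
    exact congrArg (fun g : PR K m →ₐ[K] Polynomial O => g f) this
  have hΘ : ∀ n f, f.IsHomogeneous n → Θ f = Polynomial.X ^ n * Polynomial.C (χ f) := by
    intro n f hf
    rw [← hχ f]
    exact aeval_scale hf _ _
  have hcoef : ∀ f n, (Θ f).coeff n = χ (homogeneousComponent n f) := by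
    intro f n
    conv_lhs => rw [← sum_homogeneousComponent f, map_sum, Polynomial.finsetSum_coeff]
    rw [Finset.sum_congr rfl fun i _ => by
      rw [hΘ i _ (homogeneousComponent_isHomogeneous i f), mul_comm, Polynomial.coeff_C_mul_X_pow]]
    rw [Finset.sum_ite_eq]
    split_ifs with h
    · rfl
    · rw [homogeneousComponent_eq_zero, map_zero]
      simpa using h
  have hmem : ∀ f, f ∈ RingHom.ker Θ ↔ ∀ n, χ (homogeneousComponent n f) = 0 := by
    intro f
    rw [RingHom.mem_ker, Polynomial.ext_iff]
    simp only [hcoef, Polynomial.coeff_zero]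
  refine ⟨RingHom.ker Θ, ?_, ?_, hmem⟩
  · intro f hf n
    rw [hmem] at hf ⊢
    intro k
    rw [homogeneousComponent_of_mem (homogeneousComponent_mem n f)]
    split_ifs
    · exact hf n
    · exact map_zero χ
  · intro f hf
    have hf2 : l ∈ Submodule.span K (Set.range (X : Fin (m+1) → PR K m)) := by
      rw [← homogeneousSubmodule_one_eq_span_X]; exact hl
    obtain ⟨a, ha⟩ := (Submodule.mem_span_range_iff_exists_fun K).mp hf2
    have h1 : Θ (l * f) = 0 := by
      rw [← ha, Finset.sum_mul, map_sum]
      refine Finset.sum_eq_zero fun i _ => ?_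
      rw [smul_mul_assoc, map_smul]
      have := RingHom.mem_ker.mp (hf i)
      rw [this, smul_zero]
    rw [map_mul, hΘ 1 l hl, hl1, map_one, mul_one, pow_one] at h1
    rw [RingHom.mem_ker]
    ext n
    have := congrArg (fun p => Polynomial.coeff p (n+1)) h1
    simpa using this

lemma le_idealDeg {O : Type} [CommRing O] [Algebra K O]
    (χ : PR K m →ₐ[K] O) (n : ℕ) (hn : ∀ t, n ≤ t → (Hd K m t).map χ.toLinearMap = ⊤)
    (I J : Ideal (PR K m)) (hzd : IsZeroDimI I) (hIJ : I ≤ J)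
    (hJ : ∀ t f, f.IsHomogeneous t → f ∈ J → χ f = 0) :
    finrank K O ≤ idealDeg J := by
  obtain ⟨c, hc⟩ := hzd
  have hb : ∀ t, hilbQ J t ≤ c := fun t => (hilbQ_anti hIJ t).trans (hc t)
  apply Filter.le_limsup_of_frequently_le
  · apply Filter.Eventually.frequently
    filter_upwards [Filter.eventually_ge_atTop n] with t ht
    rw [← finrank_top K O, ← hn t ht]
    apply finrank_map_le_of_ker
    intro x hx h0
    exact hJ t x hx (Ideal.Quotient.eq_zero_iff_mem.mp h0)
  · exact Filter.isBoundedUnder_of ⟨c, hb⟩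

end
end Geo

open Module MvPolynomial

/-- Lemma 1 (`c0`): for a zero-dimensional scheme `Z ⊂ ℙ^m` of degree `z` with `0 < z < 3d`
(and `deg Z - deg Z_red ≤ d` when `m > 2`), one has `h^1(𝓘_Z(d)) > 0` iff there is a line
`L` with `deg(L ∩ Z) ≥ d+2` or a conic `T` with `deg(T ∩ Z) ≥ 2d+2`. -/
theorem stmt1 (K : Type) [Field K] [IsAlgClosed K] [CharZero K]
    (m d z : ℕ) (hm : 2 ≤ m) (hz0 : 0 < z) (hz : z < 3 * d)
    (Z : PSub K m) (hzd : IsZeroDimI Z.I) (hdeg : idealDeg Z.I = z)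
    (hred : 2 < m → idealDeg Z.I - (pzeroLocus Z.I).ncard ≤ d) :
    0 < h1I Z.I d ↔
      ((∃ L : Set (Pm K m), IsLine L ∧ d + 2 ≤ interDeg (idealOfSet L) Z.I) ∨
        (∃ J : Ideal (PR K m), IsConic J ∧ 2 * d + 2 ≤ interDeg J Z.I)) := by
  have : Infinite K := IsAlgClosed.instInfinite
  obtain ⟨A, l, hl, hl1, hA⟩ := Geo.exists_dehom Z.I Z.sat
  obtain ⟨h1, hfd, n, hn⟩ := Geo.setup Z.I A hA l hl hl1 hzd
  have hdegA := Geo.idealDeg_eq Z.I A hA h1 n hn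
  have hh : 0 < h1I Z.I d ↔ (Hd K m d).map (Ideal.Quotient.mkₐ K A).toLinearMap ≠ ⊤ := by
    rw [h1I, hdegA, Geo.hilbQ_eq Z.I A hA]
    constructor
    · intro h0 htop
      rw [htop, finrank_top] at h0
      omega
    · intro hne
      have := Submodule.finrank_lt hne
      omega
  rw [hh]
  constructor
  · intro hne
    rw [← Geo.psi_pow] at hne
    obtain ⟨a, ha⟩ := Core.core _ h1 ⟨n, by rw [Geo.psi_pow]; exact hn⟩ d
      (by rw [← hdegA, hdeg]; exact hz) hne
    let χ : PR K m →ₐ[K] ((PR K m ⧸ A) ⧸ a) :=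
      (Ideal.Quotient.mkₐ K a).comp (Ideal.Quotient.mkₐ K A)
    have hχmap : ∀ t, (Hd K m t).map χ.toLinearMap =
        ((Hd K m t).map (Ideal.Quotient.mkₐ K A).toLinearMap).map
          (Ideal.Quotient.mkₐ K a).toLinearMap := by
      intro t
      rw [← Submodule.map_comp]; rfl
    have hχ1 : χ l = 1 := by
      change Ideal.Quotient.mkₐ K a (Ideal.Quotient.mkₐ K A l) = 1
      rw [hl1, map_one]
    have hχtop : ∀ t, n ≤ t → (Hd K m t).map χ.toLinearMap = ⊤ := by
      intro t ht
      have h2 := Core.pow_mono' _ h1 ht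
      simp only [Geo.psi_pow] at h2
      rw [hn, top_le_iff] at h2
      rw [hχmap, h2, Submodule.map_top, LinearMap.range_eq_top]
      exact Ideal.Quotient.mkₐ_surjective K a
    obtain ⟨J, hJh, hJs, hJ⟩ := Geo.exists_homogKer χ l hl hχ1
    have hIJ : Z.I ≤ J := by
      intro f hf
      rw [hJ]
      intro k
      have h3 := (hA k _ (homogeneousComponent_isHomogeneous k f)).mpr (Z.homog f hf k)
      change Ideal.Quotient.mkₐ K a (Ideal.Quotient.mkₐ K A _) = 0
      have h4 : Ideal.Quotient.mkₐ K A (homogeneousComponent k f) = 0 :=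
        Ideal.Quotient.eq_zero_iff_mem.mpr h3
      rw [h4, map_zero]
    have hJhom : ∀ t f, f.IsHomogeneous t → (f ∈ J ↔ χ f = 0) := by
      intro t f hf
      rw [hJ]
      constructor
      · intro h0
        have := h0 t
        rwa [homogeneousComponent_of_mem hf, if_pos rfl] at this
      · intro h0 k
        rw [homogeneousComponent_of_mem hf]
        split_ifs
        · exact h0
        · exact map_zero χ
    have hWJ : ∀ (r : ℕ) (b : Fin (r+1) → ((PR K m ⧸ A) ⧸ a)) (w : Fin (r+1) → (Fin (m+1) → K)),
        LinearIndependent K w → (∀ f, χ f = aeval b (Geo.rho w f)) →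
        idealOfSet {a : Pm K m | a.submodule ≤ Submodule.span K (Set.range w)} ≤ J := by
      intro r b w hw hb
      rw [idealOfSet, Ideal.span_le]
      intro f hf
      have hf0 : Geo.rho w f = 0 := Geo.rho_mem_zero w hw (Ideal.subset_span hf)
      obtain ⟨⟨t, ht⟩, -⟩ := hf
      rw [SetLike.mem_coe, hJhom t f ht, hb, hf0, map_zero]
    have hfin : ∀ J' : Ideal (PR K m), J' ≤ J →
        finrank K ((PR K m ⧸ A) ⧸ a) ≤ interDeg J' Z.I := by
      intro J' hJ'
      exact Geo.le_idealDeg χ n hχtop Z.I (J' ⊔ Z.I) hzd le_sup_right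
        (fun t f hf hm => (hJhom t f hf).mp (sup_le hJ' hIJ hm))
    rcases ha with ⟨ha1, ha2⟩ | ⟨ha1, ha2, ha3⟩
    · left
      rw [← hχmap] at ha1
      obtain ⟨b, w, hw, hb, -⟩ := Geo.exists_coords χ 2 ha1
      refine ⟨{a | a.submodule ≤ Submodule.span K (Set.range w)},
        ⟨_, by rw [finrank_span_eq_card hw]; simp, rfl⟩, ?_⟩
      exact ha2.trans (hfin _ (hWJ 1 b w hw hb))
    · right
      rw [← hχmap] at ha1
      rw [Geo.psi_pow] at ha2
      obtain ⟨b, w, hw, hb, hbV⟩ := Geo.exists_coords χ 3 ha1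
      rw [← hχmap] at ha2
      have hmap : (homogeneousSubmodule (Fin (2+1)) K 2).map (aeval b).toLinearMap
          = (Hd K m 2).map χ.toLinearMap := by
        have hcomp : χ.toLinearMap = (aeval b).toLinearMap ∘ₗ (Geo.rho w).toLinearMap :=
          LinearMap.ext hb
        rw [hcomp, Submodule.map_comp, Geo.rho_surj w hw]
      obtain ⟨qb, hqb, hqb0, hqbne⟩ : ∃ qb ∈ homogeneousSubmodule (Fin (2+1)) K 2,
          aeval b qb = 0 ∧ qb ≠ 0 := by
        by_contra hcon
        push Not at hcon
        have h6 := Geo.finrank_map_le_of_ker (homogeneousSubmodule (Fin (2+1)) K 2)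
          LinearMap.id (aeval b).toLinearMap hcon
        rw [hmap, Submodule.map_id, Geo.finrank_hom] at h6
        have h7 : (2 + 2).choose 2 = 6 := rfl
        omega
      have hqb' : qb ∈ (Hd K m 2).map (Geo.rho w).toLinearMap := by
        rw [Geo.rho_surj w hw]; exact hqb
      obtain ⟨q, hq, rfl⟩ := hqb'
      refine ⟨_, ⟨Submodule.span K (Set.range w), q, by rw [finrank_span_eq_card hw]; simp, hq,
        ?_, rfl⟩, ?_⟩
      · intro hmem
        exact hqbne (Geo.rho_mem_zero (r := 2) w hw hmem)
      · apply ha3.trans (hfin _ _)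
        apply sInf_le
        refine ⟨sup_le (hWJ 2 b w hw hb) ?_, hJh, hJs⟩
        rw [Ideal.span_singleton_le_iff_mem, hJhom 2 q hq, hb]
        exact hqb0
  · intro hgeo htop
    have hspan : ∀ (r : ℕ) (W : Submodule K (Fin (m+1) → K)), finrank K W = r →
        ∃ w : Fin r → (Fin (m+1) → K), LinearIndependent K w ∧
          Submodule.span K (Set.range w) = W := by
      intro r W hW
      let b := finBasisOfFinrankEq K W hW
      refine ⟨fun j => (b j : Fin (m+1) → K), ?_, ?_⟩
      · exact b.linearIndependent.map' W.subtype W.ker_subtype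
      · have := b.span_eq
        rw [show (fun j => (b j : Fin (m+1) → K)) = W.subtype ∘ b from rfl, Set.range_comp,
          ← Submodule.map_span, this, Submodule.map_top, Submodule.range_subtype]
    rcases hgeo with ⟨_, ⟨W, hW, rfl⟩, hdl⟩ | ⟨_, ⟨W, q, hW, hq, hq0, rfl⟩, hdc⟩
    · obtain ⟨w, hw, rfl⟩ := hspan 2 W hW
      have h2 := Geo.idealDeg_le Z.I A _ hA l hl hl1 d htop
        (le_sup_right : Z.I ≤ idealOfSet
          {a : Pm K m | a.submodule ≤ Submodule.span K (Set.range w)} ⊔ Z.I)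
      have h3 := Geo.hilbQ_line w _ (le_sup_left : _ ≤ idealOfSet
          {a : Pm K m | a.submodule ≤ Submodule.span K (Set.range w)} ⊔ Z.I) d
      rw [interDeg] at hdl
      omega
    · obtain ⟨w, hw, rfl⟩ := hspan 3 W hW
      rw [interDeg] at hdc
      have h2 := Geo.idealDeg_le Z.I A _ hA l hl hl1 d htop
        (le_sup_right : Z.I ≤ satIdeal (idealOfSet
          {a : Pm K m | a.submodule ≤ Submodule.span K (Set.range w)} ⊔ Ideal.span {q}) ⊔ Z.I)
      have h4 : idealOfSet {a : Pm K m | a.submodule ≤ Submodule.span K (Set.range w)} ⊔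
          Ideal.span {q} ≤ satIdeal (idealOfSet
          {a : Pm K m | a.submodule ≤ Submodule.span K (Set.range w)} ⊔ Ideal.span {q}) ⊔ Z.I :=
        le_trans (le_sInf fun J' hJ' => hJ'.1) le_sup_left
      have h3 := Geo.hilbQ_conic w hw _ (le_sup_left.trans h4) q hq
        (h4 (le_sup_right (a := idealOfSet _) (Ideal.mem_span_singleton_self q))) hq0 d (by omega)
      omega
end

section
/- Fix P ∈ ℙ^n. Assume there exist zero-dimensional closed subschemes A, B ⊂ ℙ^m with A ≠ B such that P ∈ ⟨ν_d(A)⟩ ∩ ⟨ν_d(B)⟩, P ∉ ⟨ν_d(A')⟩ for every closed subscheme A' ⊊ A, and P ∉ ⟨ν_d(B')⟩ for every closed subscheme B' ⊊ B. Then h^1(I_{A∪B}(d)) > 0. -/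
open scoped LinearAlgebra.Projectivization

section

variable {K : Type} [Field K] {m : ℕ}

lemma aux_comp_mul {l : PR K m} {k : ℕ} (hl : l.IsHomogeneous k) (f : PR K m) (n : ℕ) :
    MvPolynomial.homogeneousComponent (k + n) (l * f)
      = l * MvPolynomial.homogeneousComponent n f := by
  letI := MvPolynomial.gradedAlgebra (σ := Fin (m+1)) (R := K)
  have h := DirectSum.coe_decompose_mul_add_of_left_mem
    (MvPolynomial.homogeneousSubmodule (Fin (m+1)) K) (a := l) (b := f) (i := k) (j := n) hl
  have e : ∀ (g : PR K m) (i : ℕ),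
      ((DirectSum.decompose (MvPolynomial.homogeneousSubmodule (Fin (m+1)) K) g i :
        MvPolynomial.homogeneousSubmodule (Fin (m+1)) K i) : PR K m)
      = MvPolynomial.homogeneousComponent i g := fun g i =>
    MvPolynomial.decomposition.decompose'_apply g i
  rwa [e, e] at h

lemma aux_not_assoc {I : Ideal (PR K m)} (hs : IsSatI I) {p : Ideal (PR K m)}
    (hp : p ∈ associatedPrimes (PR K m) (PR K m ⧸ I)) :
    ∃ i, (MvPolynomial.X i : PR K m) ∉ p := by
  by_contra! hX
  rw [AssociatedPrimes.mem_iff, isAssociatedPrime_iff] at hp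
  obtain ⟨hpr, x, hx⟩ := hp
  obtain ⟨f, rfl⟩ := Ideal.Quotient.mk_surjective x
  have hf : f ∈ I := by
    apply hs
    intro i
    have := hX i
    rw [hx, Submodule.mem_colon_singleton] at this
    rw [Submodule.mem_bot] at this
    exact Ideal.Quotient.eq_zero_iff_mem.1 this
  apply hpr.ne_top
  rw [Ideal.eq_top_iff_one, hx, Submodule.mem_colon_singleton]
  rw [Ideal.Quotient.eq_zero_iff_mem.2 hf]
  simp

lemma aux_exists_linear [Infinite K] {I J : Ideal (PR K m)} (hI : IsSatI I) (hJ : IsSatI J) :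
    ∃ l : PR K m, l.IsHomogeneous 1 ∧ (∀ f, l * f ∈ I → f ∈ I) ∧ (∀ f, l * f ∈ J → f ∈ J) := by
  classical
  have fin : (associatedPrimes (PR K m) (PR K m ⧸ I) ∪
      associatedPrimes (PR K m) (PR K m ⧸ J)).Finite :=
    (associatedPrimes.finite _ _).union (associatedPrimes.finite _ _)
  let g : Ideal (PR K m) → Submodule K (Hd K m 1) := fun p =>
    (p.restrictScalars K).comap (Hd K m 1).subtype
  have key := Subspace.biUnion_ne_univ_of_top_notMem (k := K) (E := Hd K m 1)
    (s := fin.toFinset.image g) (by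
      intro h
      rw [Finset.mem_image] at h
      obtain ⟨p, hp, hg⟩ := h
      have hp' := fin.mem_toFinset.1 hp
      obtain ⟨i, hi⟩ : ∃ i, (MvPolynomial.X i : PR K m) ∉ p := by
        rcases hp' with h | h
        · exact aux_not_assoc hI h
        · exact aux_not_assoc hJ h
      apply hi
      have : (⟨MvPolynomial.X i, MvPolynomial.isHomogeneous_X K i⟩ : Hd K m 1) ∈ g p := by
        rw [hg]; trivial
      exact this)
  rw [Set.ne_univ_iff_exists_notMem] at key
  obtain ⟨l, hl⟩ := key
  have hl' : ∀ p ∈ associatedPrimes (PR K m) (PR K m ⧸ I) ∪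
      associatedPrimes (PR K m) (PR K m ⧸ J), (l : PR K m) ∉ p := by
    intro p hp hlp
    apply hl
    simp only [Set.mem_iUnion]
    exact ⟨g p, Finset.mem_image_of_mem _ (fin.mem_toFinset.2 hp), hlp⟩
  have gen : ∀ Q : Ideal (PR K m),
      (∀ p ∈ associatedPrimes (PR K m) (PR K m ⧸ Q), (l : PR K m) ∉ p) →
      ∀ f, (l : PR K m) * f ∈ Q → f ∈ Q := by
    intro Q hQ f hf
    by_contra hfQ
    have hz := biUnion_associatedPrimes_eq_zero_divisors (PR K m) (PR K m ⧸ Q)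
    have : (l : PR K m) ∈ { r : PR K m | ∃ x : PR K m ⧸ Q, x ≠ 0 ∧ r • x = 0 } :=
      ⟨Ideal.Quotient.mk Q f, fun h => hfQ (Ideal.Quotient.eq_zero_iff_mem.1 h),
        Ideal.Quotient.eq_zero_iff_mem.2 hf⟩
    rw [← hz] at this
    simp only [Set.mem_iUnion] at this
    obtain ⟨p, hp, hlp⟩ := this
    exact hQ p hp hlp
  exact ⟨l, l.2, gen I fun p hp => hl' p (Or.inl hp), gen J fun p hp => hl' p (Or.inr hp)⟩

instance aux_fin (t : ℕ) : Module.Finite K (Hd K m t) :=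
  Module.Finite.iff_fg.2 (MvPolynomial.homogeneousSubmodule_fg _ _ t)

/-- Degree `t` part of the quotient. -/
noncomputable abbrev auxM (I : Ideal (PR K m)) (t : ℕ) : Submodule K (PR K m ⧸ I) :=
  (Hd K m t).map (Ideal.Quotient.mkₐ K I).toLinearMap

lemma aux_mulmap {I : Ideal (PR K m)} {L : PR K m} {k : ℕ} (hL : L.IsHomogeneous k) (t : ℕ) :
    (auxM I t).map (LinearMap.mulLeft K (Ideal.Quotient.mk I L)) ≤ auxM I (k + t) := by
  rintro _ ⟨_, ⟨f, hf, rfl⟩, rfl⟩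
  refine ⟨L * f, ?_, ?_⟩
  · exact hL.mul hf
  · simp

lemma aux_inj {I : Ideal (PR K m)} {L : PR K m} (h : ∀ f, L * f ∈ I → f ∈ I) :
    Function.Injective (LinearMap.mulLeft K (Ideal.Quotient.mk I L)) := by
  rw [← LinearMap.ker_eq_bot, LinearMap.ker_eq_bot']
  intro x hx
  obtain ⟨f, rfl⟩ := Ideal.Quotient.mk_surjective x
  rw [LinearMap.mulLeft_apply, ← map_mul, Ideal.Quotient.eq_zero_iff_mem] at hx
  exact Ideal.Quotient.eq_zero_iff_mem.2 (h f hx)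

lemma aux_mono {I : Ideal (PR K m)} {L : PR K m} {k : ℕ} (hL : L.IsHomogeneous k)
    (h : ∀ f, L * f ∈ I → f ∈ I) (t : ℕ) : hilbQ I t ≤ hilbQ I (k + t) := by
  have := Submodule.finrank_mono (aux_mulmap (I := I) hL t)
  rwa [LinearEquiv.finrank_eq (Submodule.equivMapOfInjective _ (aux_inj h) _).symm] at this

lemma aux_surj {I : Ideal (PR K m)} {L : PR K m} {k : ℕ} (hL : L.IsHomogeneous k)
    (h : ∀ f, L * f ∈ I → f ∈ I) (t : ℕ) (he : hilbQ I (k + t) ≤ hilbQ I t)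
    (a : PR K m) (ha : a.IsHomogeneous (k + t)) :
    ∃ a' : PR K m, a'.IsHomogeneous t ∧ L * a' - a ∈ I := by
  have e : (auxM I t).map (LinearMap.mulLeft K (Ideal.Quotient.mk I L)) = auxM I (k + t) := by
    apply Submodule.eq_of_le_of_finrank_le (aux_mulmap hL t)
    rw [LinearEquiv.finrank_eq (Submodule.equivMapOfInjective _ (aux_inj h) _).symm]
    exact he
  have : (Ideal.Quotient.mk I a) ∈ auxM I (k + t) := ⟨a, ha, rfl⟩
  rw [← e] at this
  obtain ⟨_, ⟨a', ha', rfl⟩, h2⟩ := this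
  refine ⟨a', ha', ?_⟩
  rw [← Ideal.Quotient.mk_eq_mk_iff_sub_mem, map_mul]
  exact h2

lemma aux_bound (I J : Ideal (PR K m)) (t : ℕ) :
    hilbQ (I ⊓ J) t ≤ hilbQ I t + hilbQ J t := by
  let F : (PR K m ⧸ (I ⊓ J)) →ₗ[K] (PR K m ⧸ I) × (PR K m ⧸ J) :=
    (Ideal.Quotient.factorₐ K (inf_le_left : I ⊓ J ≤ I)).toLinearMap.prod
      (Ideal.Quotient.factorₐ K (inf_le_right : I ⊓ J ≤ J)).toLinearMap
  have hF : Function.Injective F := by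
    rw [← LinearMap.ker_eq_bot, LinearMap.ker_eq_bot']
    intro x hx
    obtain ⟨f, rfl⟩ := Ideal.Quotient.mk_surjective x
    have h1 : Ideal.Quotient.mk I f = 0 := congrArg Prod.fst hx
    have h2 : Ideal.Quotient.mk J f = 0 := congrArg Prod.snd hx
    rw [Ideal.Quotient.eq_zero_iff_mem] at *
    exact ⟨h1, h2⟩
  have hle : (auxM (I ⊓ J) t).map F ≤ (auxM I t).prod (auxM J t) := by
    rintro _ ⟨_, ⟨f, hf, rfl⟩, rfl⟩
    exact ⟨⟨f, hf, rfl⟩, ⟨f, hf, rfl⟩⟩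
  let G : auxM (I ⊓ J) t →ₗ[K] (auxM I t) × (auxM J t) :=
    LinearMap.prod
      (LinearMap.codRestrict _ (LinearMap.fst K _ _ ∘ₗ F ∘ₗ (auxM (I ⊓ J) t).subtype)
        fun x => (hle (Submodule.mem_map_of_mem x.2)).1)
      (LinearMap.codRestrict _ (LinearMap.snd K _ _ ∘ₗ F ∘ₗ (auxM (I ⊓ J) t).subtype)
        fun x => (hle (Submodule.mem_map_of_mem x.2)).2)
  have hG : Function.Injective G := by
    intro x y hxy
    apply Subtype.ext
    apply hF
    exact Prod.ext (congrArg (fun z => (z.1 : PR K m ⧸ I)) hxy)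
      (congrArg (fun z => (z.2 : PR K m ⧸ J)) hxy)
  have := LinearMap.finrank_le_finrank_of_injective hG
  rw [Module.finrank_prod] at this
  exact this

lemma aux_stab {I : Ideal (PR K m)} {l : PR K m} (hl : l.IsHomogeneous 1)
    (h : ∀ f, l * f ∈ I → f ∈ I) (hb : IsZeroDimI I) (d k : ℕ)
    (h0 : h1I I d = 0) : hilbQ I (k + d) ≤ hilbQ I d := by
  have hm : Monotone (hilbQ I) := monotone_nat_of_le_succ fun t => by
    have := aux_mono hl h t
    rwa [add_comm] at this
  obtain ⟨C, hC⟩ := hb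
  refine le_trans ?_ (Nat.sub_eq_zero_iff_le.1 h0)
  apply Filter.le_limsup_of_frequently_le
  · apply Filter.Eventually.frequently
    filter_upwards [Filter.eventually_ge_atTop (k + d)] with t ht using hm ht
  · exact Filter.isBoundedUnder_of ⟨C, hC⟩

/-- The ideal of elements multiplied into `Q` by a power of `l`. -/
def auxSat (Q : Ideal (PR K m)) (l : PR K m) : Ideal (PR K m) where
  carrier := {f | ∃ k, l ^ k * f ∈ Q}
  add_mem' := by
    rintro a b ⟨k, hk⟩ ⟨j, hj⟩
    refine ⟨k + j, ?_⟩
    have : l ^ (k + j) * (a + b) = l ^ j * (l ^ k * a) + l ^ k * (l ^ j * b) := by ring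
    rw [this]
    exact Q.add_mem (Q.mul_mem_left _ hk) (Q.mul_mem_left _ hj)
  zero_mem' := ⟨0, by simp⟩
  smul_mem' := by
    rintro c a ⟨k, hk⟩
    refine ⟨k, ?_⟩
    have : l ^ k * (c • a) = c * (l ^ k * a) := by rw [smul_eq_mul]; ring
    rw [this]
    exact Q.mul_mem_left _ hk

lemma aux_homog_sup {I J : Ideal (PR K m)} (hI : IsHomogI I) (hJ : IsHomogI J) :
    IsHomogI (I ⊔ J) := by
  intro f hf n
  obtain ⟨a, ha, b, hb, rfl⟩ := Submodule.mem_sup.1 hf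
  rw [map_add]
  exact Submodule.add_mem_sup (hI a ha n) (hJ b hb n)

lemma aux_pow {I : Ideal (PR K m)} {l : PR K m} (h : ∀ f, l * f ∈ I → f ∈ I) (k : ℕ) :
    ∀ f, l ^ k * f ∈ I → f ∈ I := by
  induction k with
  | zero => intro f hf; simpa using hf
  | succ k ih =>
    intro f hf
    apply h; apply ih
    rwa [← mul_assoc, ← pow_succ]

/-- The `l`-saturation as a closed subscheme. -/
def auxPSub (Q : Ideal (PR K m)) (hQ : IsHomogI Q) (l : PR K m) (hl : l.IsHomogeneous 1) :
    PSub K m where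
  I := auxSat Q l
  homog := by
    rintro f ⟨k, hk⟩ n
    refine ⟨k, ?_⟩
    have hlk : (l ^ k).IsHomogeneous k := by simpa using hl.pow k
    rw [← aux_comp_mul hlk]
    exact hQ _ hk _
  sat := by
    intro f hf
    have hmem : ∀ g ∈ Submodule.span K (Set.range (MvPolynomial.X : Fin (m+1) → PR K m)),
        g * f ∈ auxSat Q l := by
      intro g hg
      induction hg using Submodule.span_induction with
      | mem x hx => obtain ⟨i, rfl⟩ := hx; exact hf i
      | zero => simp
      | add x y _ _ hx hy => rw [add_mul]; exact Ideal.add_mem _ hx hy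
      | smul c x _ hx =>
        rw [MvPolynomial.smul_eq_C_mul, mul_assoc]; exact Ideal.mul_mem_left _ _ hx
    have h1 : l * f ∈ auxSat Q l := by
      apply hmem
      rw [← MvPolynomial.homogeneousSubmodule_one_eq_span_X]
      exact hl
    obtain ⟨k, hk⟩ := h1
    exact ⟨k + 1, by rwa [pow_succ, mul_assoc]⟩

lemma aux_span {d : ℕ} {A B : PSub K m} {l : PR K m} (hl : l.IsHomogeneous 1)
    (hA : ∀ f, l * f ∈ A.I → f ∈ A.I) (hB : ∀ f, l * f ∈ B.I → f ∈ B.I)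
    (hb : IsZeroDimI (A.I ⊓ B.I)) (h0 : h1I (A.I ⊓ B.I) d = 0) (f : PR K m)
    (hf : f.IsHomogeneous d) (hfs : f ∈ auxSat (A.I ⊔ B.I) l) :
    ∃ a b : PR K m, a.IsHomogeneous d ∧ b.IsHomogeneous d ∧ a ∈ A.I ∧ b ∈ B.I ∧ f = a + b := by
  obtain ⟨k, hk⟩ := hfs
  have hlk : (l ^ k).IsHomogeneous k := by simpa using hl.pow k
  obtain ⟨a, ha, b, hb', hab⟩ := Submodule.mem_sup.1 hk
  have hC : ∀ g, l * g ∈ A.I ⊓ B.I → g ∈ A.I ⊓ B.I := fun g hg => ⟨hA g hg.1, hB g hg.2⟩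
  have hst := aux_stab hl hC hb d k h0
  have heq := congrArg (MvPolynomial.homogeneousComponent (k + d)) hab
  rw [map_add, aux_comp_mul hlk, MvPolynomial.homogeneousComponent_eq_self hf] at heq
  obtain ⟨a', ha', ha2⟩ := aux_surj hlk (aux_pow hC k) d hst _
    (MvPolynomial.homogeneousComponent_isHomogeneous (k + d) a)
  have haI := A.homog a ha (k + d)
  have hbI := B.homog b hb' (k + d)
  have ha'I : a' ∈ A.I := aux_pow hA k _ (by
    have := A.I.add_mem ha2.1 haI
    rwa [sub_add_cancel] at this)
  refine ⟨a', f - a', ha', ?_, ha'I, ?_, by ring⟩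
  · exact (Hd K m d).sub_mem hf ha'
  · apply aux_pow hB k
    have : l ^ k * (f - a') = MvPolynomial.homogeneousComponent (k + d) b
        - (l ^ k * a' - MvPolynomial.homogeneousComponent (k + d) a) := by
      rw [mul_sub, ← heq]; ring
    rw [this]
    exact B.I.sub_mem hbI ha2.2

end


/-- Lemma 2 (`v1`): if `A ≠ B` are zero-dimensional subschemes of `ℙ^m`, with
`P ∈ ⟨ν_d(A)⟩ ∩ ⟨ν_d(B)⟩` and `P` in the span of no Veronese image of a proper subscheme of
`A` or of `B`, then `h^1(𝓘_{A∪B}(d)) > 0`. -/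
theorem stmt2 (K : Type) [Field K] [IsAlgClosed K] [CharZero K]
    (m d : ℕ) (P : PN K m d)
    (A B : PSub K m) (hA0 : IsZeroDimI A.I) (hB0 : IsZeroDimI B.I) (hAB : A.I ≠ B.I)
    (hPA : inSpanI A.I d P) (hPB : inSpanI B.I d P)
    (hA : ∀ A' : PSub K m, A.I < A'.I → ¬ inSpanI A'.I d P)
    (hB : ∀ B' : PSub K m, B.I < B'.I → ¬ inSpanI B'.I d P) :
    0 < h1I (A.I ⊓ B.I) d := by
  by_contra hcon
  have h0 : h1I (A.I ⊓ B.I) d = 0 := by omega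
  haveI : Infinite K := IsAlgClosed.instInfinite
  obtain ⟨l, hl, hlA, hlB⟩ := aux_exists_linear A.sat B.sat
  have hb : IsZeroDimI (A.I ⊓ B.I) := by
    obtain ⟨C, hC⟩ := hA0
    obtain ⟨D, hD⟩ := hB0
    exact ⟨C + D, fun t => (aux_bound _ _ t).trans (add_le_add (hC t) (hD t))⟩
  let S := auxPSub (A.I ⊔ B.I) (aux_homog_sup A.homog B.homog) l hl
  have hle : A.I ⊔ B.I ≤ S.I := fun f hf => ⟨0, by simpa using hf⟩
  have hS : inSpanI S.I d P := by
    intro f hf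
    obtain ⟨a, b, ha, hb', haI, hbI, hab⟩ :=
      aux_span hl hlA hlB hb h0 (f : PR K m) f.2 hf
    have : f = (⟨a, ha⟩ : Hd K m d) + ⟨b, hb'⟩ := Subtype.ext hab
    rw [this, map_add, hPA ⟨a, ha⟩ haI, hPB ⟨b, hb'⟩ hbI, add_zero]
  have h1 : A.I = S.I := by
    by_contra hne
    exact hA S (lt_of_le_of_ne (le_sup_left.trans hle) hne) hS
  have h2 : B.I = S.I := by
    by_contra hne
    exact hB S (lt_of_le_of_ne (le_sup_right.trans hle) hne) hS
  exact hAB (h1.trans h2.symm)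
end

section
/- Fix a conic T ⊂ ℙ^m, an integer d ≥ 5 and a finite set E ⊂ ℙ^m ∖ T with #E ≤ d−1. Then: (i) dim⟨ν_d(E ∪ T)⟩ = dim⟨ν_d(T)⟩ + #E; (ii) for every closed subscheme U ⊆ T one has ⟨ν_d(U ∪ E)⟩ ∩ ⟨ν_d(T)⟩ = ⟨ν_d(U)⟩; (iii) for every O ∈ ⟨ν_d(T ∪ E)⟩ ∖ ⟨ν_d(E)⟩, the set ⟨{O} ∪ ν_d(E)⟩ ∩ ⟨ν_d(T)⟩ is a single point. -/
open scoped LinearAlgebra.Projectivization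

section helpers

variable {K : Type} [Field K] {m : ℕ}

/-- Restriction to the line through `v`. -/
noncomputable def psiV (v : Fin (m+1) → K) : PR K m →ₐ[K] Polynomial K :=
  MvPolynomial.aeval (fun i => Polynomial.C (v i) * Polynomial.X)

lemma psiV_homog (v : Fin (m+1) → K) (f : PR K m) (n : ℕ) (hf : f.IsHomogeneous n) :
    psiV v f = Polynomial.C (MvPolynomial.eval v f) * Polynomial.X ^ n := by
  rw [psiV, MvPolynomial.aeval_def, MvPolynomial.eval₂_eq', MvPolynomial.eval_eq', map_sum,
    Finset.sum_mul]
  refine Finset.sum_congr rfl fun s hs => ?_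
  have hdeg : ∑ i, s i = n := by
    have h := hf (MvPolynomial.mem_support_iff.mp hs)
    rw [← h, Finsupp.weight_apply, Finsupp.sum_fintype _ _ (by simp)]
    simp
  simp only [mul_pow, Finset.prod_mul_distrib, Finset.prod_pow_eq_pow_sum, hdeg, map_mul,
    map_prod, map_pow, Polynomial.algebraMap_eq]
  ring

lemma psiV_coeff (v : Fin (m+1) → K) (f : PR K m) (n : ℕ) :
    (psiV v f).coeff n = MvPolynomial.eval v (MvPolynomial.homogeneousComponent n f) := by
  conv_lhs => rw [← MvPolynomial.sum_homogeneousComponent f]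
  rw [map_sum, Polynomial.finsetSum_coeff]
  have : ∀ i, (psiV v (MvPolynomial.homogeneousComponent i f)).coeff n =
      if i = n then MvPolynomial.eval v (MvPolynomial.homogeneousComponent n f) else 0 := by
    intro i
    rw [psiV_homog v _ i (MvPolynomial.homogeneousComponent_isHomogeneous i f),
      Polynomial.coeff_C_mul_X_pow]
    by_cases h : i = n
    · simp [h]
    · simp [h, Ne.symm h]
  simp only [this, Finset.sum_ite_eq', Finset.mem_range]
  split_ifs with h
  · rfl
  · rw [MvPolynomial.homogeneousComponent_eq_zero _ _ (by omega), map_zero]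

lemma exists_lin (W : Submodule K (Fin (m+1) → K)) (v : Fin (m+1) → K) (hv : v ∉ W) :
    ∃ L : PR K m, L.IsHomogeneous 1 ∧ (∀ w ∈ W, MvPolynomial.eval w L = 0) ∧
      MvPolynomial.eval v L ≠ 0 := by
  obtain ⟨φ, hφ, hW⟩ := Submodule.exists_le_ker_of_notMem hv
  have key : ∀ w, MvPolynomial.eval w
      (∑ i, MvPolynomial.C (φ (Pi.single i 1)) * MvPolynomial.X i : PR K m) = φ w := by
    intro w
    conv_rhs => rw [← LinearMap.sum_single_apply _ w] 
    simp only [map_sum, map_mul, MvPolynomial.eval_C, MvPolynomial.eval_X]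
    refine Finset.sum_congr rfl fun i _ => ?_
    have : (Pi.single i (w i) : Fin (m+1) → K) = w i • Pi.single i 1 := by
      ext j; by_cases h : j = i
      · subst h; simp
      · simp [h]
    simp [this, mul_comm]
  refine ⟨∑ i, MvPolynomial.C (φ (Pi.single i 1)) * MvPolynomial.X i, ?_, ?_, ?_⟩
  · exact MvPolynomial.IsHomogeneous.sum _ _ _ fun i _ => MvPolynomial.isHomogeneous_C_mul_X _ _
  · intro w hw; rw [key]; exact hW hw
  · rw [key]; exact hφ

lemma mem_conic_of_not (J : Ideal (PR K m)) (hJ : IsConic J) (a : Pm K m)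
    (ha : a ∉ pzeroLocus J) :
    ∃ f ∈ J, ∃ n, n ≤ 2 ∧ f.IsHomogeneous n ∧ MvPolynomial.eval a.rep f ≠ 0 := by
  obtain ⟨W, q, -, hq, -, hJ⟩ := hJ
  have hsub : idealOfSet {a : Pm K m | a.submodule ≤ W} ⊔ Ideal.span {q} ≤ J := by
    rw [hJ]; exact le_sInf fun J' h => h.1
  by_cases haW : a.rep ∈ W
  · by_cases hqa : MvPolynomial.eval a.rep q = 0
    · exfalso
      apply ha
      have hle : J ≤ RingHom.ker (psiV a.rep) := by
        rw [hJ]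
        refine sInf_le ⟨?_, ?_, ?_⟩
        · refine sup_le ?_ ?_
          · refine Ideal.span_le.mpr ?_
            rintro f ⟨⟨n, hn⟩, hf⟩
            have : MvPolynomial.eval a.rep f = 0 := by
              apply hf
              change a.submodule ≤ W
              rw [Projectivization.submodule_eq]
              simpa using haW
            simp [RingHom.mem_ker, psiV_homog _ f n hn, this]
          · rw [Ideal.span_singleton_le_iff_mem]
            simp [RingHom.mem_ker, psiV_homog _ q 2 hq, hqa]
        · intro f hf n
          rw [RingHom.mem_ker] at hf ⊢
          rw [psiV_homog _ _ n (MvPolynomial.homogeneousComponent_isHomogeneous n f),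
            ← psiV_coeff, hf]
          simp
        · intro f hf
          obtain ⟨i, hi⟩ := Function.ne_iff.mp a.rep_nonzero
          have h := hf i
          rw [RingHom.mem_ker, map_mul] at h
          rw [RingHom.mem_ker]
          refine (mul_eq_zero.mp h).resolve_left ?_
          simpa [psiV] using hi
      intro f hf n
      have h := hle hf
      rw [RingHom.mem_ker] at h
      rw [← psiV_coeff, h]; simp
    · exact ⟨q, hsub (Ideal.mem_sup_right (Ideal.mem_span_singleton_self q)), 2, le_rfl, hq, hqa⟩
  · obtain ⟨L, h1, h2, h3⟩ := exists_lin W a.rep haW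
    refine ⟨L, hsub (Ideal.mem_sup_left (Ideal.subset_span ⟨⟨1, h1⟩, ?_⟩)), 1, by omega, h1, h3⟩
    intro b hb
    apply h2
    have hb' : b.submodule ≤ W := hb
    rw [Projectivization.submodule_eq] at hb'
    simpa using hb'

lemma exists_sep (J : Ideal (PR K m)) (hJ : IsConic J) (d : ℕ)
    (E : Finset (Pm K m)) (hE : E.card + 1 ≤ d) (a : Pm K m) (haE : a ∈ E)
    (ha : a ∉ pzeroLocus J) :
    ∃ g : Hd K m d, (g : PR K m) ∈ J ∧ MvPolynomial.eval a.rep (g : PR K m) = 1 ∧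
      ∀ b ∈ E, b ≠ a → MvPolynomial.eval b.rep (g : PR K m) = 0 := by
  classical
  obtain ⟨f, hfJ, n, hn, hf, hfa⟩ := mem_conic_of_not J hJ a ha
  have hL : ∀ b : Pm K m, ∃ L : PR K m, L.IsHomogeneous 1 ∧
      (b ≠ a → MvPolynomial.eval b.rep L = 0) ∧ MvPolynomial.eval a.rep L ≠ 0 := by
    intro b
    by_cases hab : b = a
    · obtain ⟨L, h1, -, h3⟩ := exists_lin (⊥ : Submodule K (Fin (m+1) → K)) a.rep
        (by simpa using a.rep_nonzero)
      exact ⟨L, h1, fun h => absurd hab h, h3⟩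
    · obtain ⟨L, h1, h2, h3⟩ := exists_lin (Submodule.span K {b.rep}) a.rep (by
        intro h
        rw [Submodule.mem_span_singleton] at h
        apply hab
        rw [← b.mk_rep, ← a.mk_rep, eq_comm, Projectivization.mk_eq_mk_iff']
        exact h)
      exact ⟨L, h1, fun _ => h2 _ (Submodule.mem_span_singleton_self _), h3⟩
  choose L h1 h2 h3 using hL
  have hcard : (E.erase a).card + 1 = E.card := Finset.card_erase_add_one haE
  set p : PR K m := f * (∏ b ∈ E.erase a, L b) * L a ^ (d - n - (E.erase a).card) with hp
  have hph : p.IsHomogeneous d := by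
    have hprod : (∏ b ∈ E.erase a, L b).IsHomogeneous (E.erase a).card := by
      have := MvPolynomial.IsHomogeneous.prod (E.erase a) L (fun _ => 1) (fun b _ => h1 b)
      simpa using this
    have := (hf.mul hprod).mul ((h1 a).pow (d - n - (E.erase a).card))
    have e : n + (E.erase a).card + 1 * (d - n - (E.erase a).card) = d := by omega
    rwa [e] at this
  have hpa : MvPolynomial.eval a.rep p ≠ 0 := by
    rw [hp, map_mul, map_mul, map_pow, map_prod]
    exact mul_ne_zero (mul_ne_zero hfa (Finset.prod_ne_zero_iff.mpr fun b _ => h3 b))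
      (pow_ne_zero _ (h3 a))
  refine ⟨(MvPolynomial.eval a.rep p)⁻¹ • ⟨p, (MvPolynomial.mem_homogeneousSubmodule _ _).mpr hph⟩,
    ?_, ?_, ?_⟩
  · rw [Submodule.coe_smul, MvPolynomial.smul_eq_C_mul]
    apply Ideal.mul_mem_left
    change p ∈ J
    rw [hp, mul_assoc]
    exact Ideal.mul_mem_right _ _ hfJ
  · rw [Submodule.coe_smul, MvPolynomial.smul_eval]
    exact inv_mul_cancel₀ hpa
  · intro b hb hba
    rw [Submodule.coe_smul, MvPolynomial.smul_eval]
    have : MvPolynomial.eval b.rep p = 0 := by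
      rw [hp, map_mul, map_mul, map_prod,
        Finset.prod_eq_zero (Finset.mem_erase.mpr ⟨hba, hb⟩) (h2 b hba)]
      simp
    simp [this]

lemma mem_idealOfSet_iff (S : Set (Pm K m)) (d : ℕ) (f : Hd K m d) :
    (f : PR K m) ∈ idealOfSet S ↔ ∀ a ∈ S, MvPolynomial.eval a.rep (f : PR K m) = 0 := by
  constructor
  · intro h a ha
    have hle : idealOfSet S ≤ RingHom.ker (MvPolynomial.eval a.rep) :=
      Ideal.span_le.mpr fun g hg => hg.2 a ha
    exact hle h
  · intro h
    exact Ideal.subset_span ⟨⟨d, (MvPolynomial.mem_homogeneousSubmodule _ _).mp f.2⟩, h⟩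

lemma hilbQ_add (I : Ideal (PR K m)) (d : ℕ) :
    hilbQ I d + Module.finrank K
      (LinearMap.ker ((Ideal.Quotient.mkₐ K I).toLinearMap ∘ₗ (Hd K m d).subtype)) =
      Module.finrank K (Hd K m d) := by
  have : Module.Finite K (Hd K m d) :=
    Module.Finite.of_fg (MvPolynomial.homogeneousSubmodule_fg _ _ d)
  rw [← LinearMap.finrank_range_add_finrank_ker
    ((Ideal.Quotient.mkₐ K I).toLinearMap ∘ₗ (Hd K m d).subtype), LinearMap.range_comp,
    Submodule.range_subtype]
  rfl

lemma mem_kerQ (I : Ideal (PR K m)) (d : ℕ) (f : Hd K m d) :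
    f ∈ LinearMap.ker ((Ideal.Quotient.mkₐ K I).toLinearMap ∘ₗ (Hd K m d).subtype) ↔
      (f : PR K m) ∈ I := by
  rw [LinearMap.mem_ker]
  exact Ideal.Quotient.eq_zero_iff_mem

lemma nu_apply (d : ℕ) (v : Fin (m+1) → K) (f : Hd K m d) :
    nu d v f = MvPolynomial.eval v (f : PR K m) := by
  simp [nu, MvPolynomial.aeval_eq_eval]

end helpers

/-- Lemma 4 (`v3.0`): for a conic `T ⊂ ℙ^m`, `d ≥ 5` and a finite set `E ⊂ ℙ^m ∖ T` with
`#E ≤ d-1`: (i) `dim⟨ν_d(E ∪ T)⟩ = dim⟨ν_d(T)⟩ + #E`; (ii) for every closed subscheme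
`U ⊆ T`, `⟨ν_d(U ∪ E)⟩ ∩ ⟨ν_d(T)⟩ = ⟨ν_d(U)⟩`; (iii) for every
`O ∈ ⟨ν_d(T ∪ E)⟩ ∖ ⟨ν_d(E)⟩`, the set `⟨{O} ∪ ν_d(E)⟩ ∩ ⟨ν_d(T)⟩` is a single point. -/
theorem stmt5 (K : Type) [Field K] [IsAlgClosed K] [CharZero K]
    (m d : ℕ) (hd : 5 ≤ d) (T : PSub K m) (hT : IsConic T.I)
    (E : Finset (Pm K m)) (hET : ∀ a ∈ E, a ∉ pzeroLocus T.I) (hE : E.card + 1 ≤ d) :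
    (hilbQ (T.I ⊓ idealOfSet (↑E : Set (Pm K m))) d = hilbQ T.I d + E.card) ∧
    (∀ U : PSub K m, T.I ≤ U.I →
      {P : PN K m d | inSpanI (U.I ⊓ idealOfSet (↑E : Set (Pm K m))) d P ∧ inSpanI T.I d P} =
        {P : PN K m d | inSpanI U.I d P}) ∧
    (∀ O : PN K m d, inSpanI (T.I ⊓ idealOfSet (↑E : Set (Pm K m))) d O →
      ¬ inSpanSet d (↑E : Set (Pm K m)) O →
      ∃! Q : PN K m d,
        Q.rep ∈ Submodule.span K (insert O.rep ((fun a => nu d a.rep) '' (↑E : Set (Pm K m)))) ∧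
          inSpanI T.I d Q) := by
  classical
  have hex : ∀ a : Pm K m, ∃ g : Hd K m d, (g : PR K m) ∈ T.I ∧
      (a ∈ E → ∀ b ∈ E, nu d b.rep g = if b = a then 1 else 0) := by
    intro a
    by_cases ha : a ∈ E
    · obtain ⟨g, h1, h2, h3⟩ := exists_sep T.I hT d E hE a ha (hET a ha)
      refine ⟨g, h1, fun _ b hb => ?_⟩
      rw [nu_apply]
      split_ifs with h
      · rw [h, h2]
      · exact h3 b hb h
    · exact ⟨0, by simp, fun h => absurd h ha⟩
  choose g hgT hg using hex
  have hmemE : ∀ f : Hd K m d, (f : PR K m) ∈ idealOfSet (↑E : Set (Pm K m)) ↔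
      ∀ a ∈ E, nu d a.rep f = 0 := by
    intro f
    rw [mem_idealOfSet_iff]
    simp only [nu_apply, Finset.mem_coe]
  -- interpolation
  have hsumT : ∀ c : Pm K m → K, ((∑ a ∈ E, c a • g a : Hd K m d) : PR K m) ∈ T.I := by
    intro c
    rw [Submodule.coe_sum]
    refine Ideal.sum_mem _ fun a _ => ?_
    rw [Submodule.coe_smul, MvPolynomial.smul_eq_C_mul]
    exact Ideal.mul_mem_left _ _ (hgT a)
  have hsumE : ∀ c : Pm K m → K, ∀ b ∈ E, nu d b.rep (∑ a ∈ E, c a • g a) = c b := by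
    intro c b hb
    rw [map_sum]
    rw [Finset.sum_congr rfl (g := fun a => if b = a then c a else 0)]
    · simp [hb]
    · intro a ha
      rw [map_smul, hg a ha b hb]
      simp
  have hdec : ∀ f : Hd K m d,
      ((f - ∑ a ∈ E, nu d a.rep f • g a : Hd K m d) : PR K m) ∈
        idealOfSet (↑E : Set (Pm K m)) := by
    intro f
    rw [hmemE]
    intro b hb
    rw [map_sub, hsumE (fun a => nu d a.rep f) b hb, sub_self]
  refine ⟨?_, ?_, ?_⟩
  · have hfin : Module.Finite K (Hd K m d) :=
      Module.Finite.of_fg (MvPolynomial.homogeneousSubmodule_fg _ _ d)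
    have e1 := hilbQ_add T.I d
    have e2 := hilbQ_add (T.I ⊓ idealOfSet (↑E : Set (Pm K m))) d
    set A := LinearMap.ker ((Ideal.Quotient.mkₐ K T.I).toLinearMap ∘ₗ (Hd K m d).subtype) with hA
    let ev : A →ₗ[K] (E → K) :=
      (LinearMap.pi fun a : E => nu d a.1.rep) ∘ₗ A.subtype
    have hsurj : Function.Surjective ev := by
      intro c
      refine ⟨⟨∑ a ∈ E, (fun a => if h : a ∈ E then c ⟨a, h⟩ else 0) a • g a,
        (mem_kerQ _ _ _).mpr (hsumT _)⟩, ?_⟩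
      funext b
      have := hsumE (fun a => if h : a ∈ E then c ⟨a, h⟩ else 0) b.1 b.2
      simpa [ev] using this
    have hker : (LinearMap.ker ev).map A.subtype = LinearMap.ker
        ((Ideal.Quotient.mkₐ K (T.I ⊓ idealOfSet (↑E : Set (Pm K m)))).toLinearMap ∘ₗ
          (Hd K m d).subtype) := by
      ext f
      rw [mem_kerQ, Submodule.mem_inf, hmemE, Submodule.mem_map]
      constructor
      · rintro ⟨x, hx, rfl⟩
        refine ⟨(mem_kerQ _ _ _).mp x.2, fun a ha => ?_⟩
        exact congrFun (LinearMap.mem_ker.mp hx) ⟨a, ha⟩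
      · rintro ⟨h1, h2⟩
        refine ⟨⟨f, (mem_kerQ _ _ _).mpr h1⟩, ?_, rfl⟩
        rw [LinearMap.mem_ker]
        funext a
        exact h2 a.1 a.2
    have e3 := LinearMap.finrank_range_add_finrank_ker (K := K) (V := A) (V₂ := E → K) ev
    rw [LinearMap.range_eq_top.mpr hsurj, finrank_top, Module.finrank_fintype_fun_eq_card,
      Fintype.card_coe] at e3
    rw [← hker, Submodule.finrank_map_subtype_eq] at e2
    omega
  · intro U hU
    ext P
    constructor
    · rintro ⟨h1, h2⟩ f hf
      have hs := hsumT (fun a => nu d a.rep f)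
      have a1 := h1 (f - ∑ a ∈ E, nu d a.rep f • g a) ⟨by
        rw [Submodule.coe_sub]
        exact U.I.sub_mem hf (hU hs), hdec f⟩
      have a2 := h2 _ hs
      rw [map_sub, a2, sub_zero] at a1
      exact a1
    · intro h
      exact ⟨fun f hf => h f hf.1, fun f hf => h f (hU hf)⟩
  · intro O hO hOE
    set φ := O.rep with hφ
    let S : Module.Dual K (Hd K m d) := ∑ a ∈ E, φ (g a) • nu d a.rep
    have hS : S ∈ dualSpan d (↑E : Set (Pm K m)) :=
      Submodule.sum_mem _ fun a ha => Submodule.smul_mem _ _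
        (Submodule.subset_span ⟨a, ha, rfl⟩)
    have hψ0 : φ - S ≠ 0 := by
      intro h
      apply hOE
      change φ ∈ _
      rw [sub_eq_zero.mp h]; exact hS
    have hψT : ∀ f : Hd K m d, (f : PR K m) ∈ T.I → (φ - S) f = 0 := by
      intro f hf
      have a1 := hO (f - ∑ a ∈ E, nu d a.rep f • g a) ⟨by
        rw [Submodule.coe_sub]
        exact T.I.sub_mem hf (hsumT _), hdec f⟩
      rw [map_sub, map_sum] at a1
      rw [LinearMap.sub_apply, ← a1]
      congr 1
      simp only [S, LinearMap.sum_apply, LinearMap.smul_apply, map_smul, smul_eq_mul]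
      exact Finset.sum_congr rfl fun a _ => mul_comm _ _
    have hspanmem : φ - S ∈ Submodule.span K
        (insert φ ((fun a => nu d a.rep) '' (↑E : Set (Pm K m)))) :=
      Submodule.sub_mem _ (Submodule.subset_span (Set.mem_insert _ _))
        (Submodule.span_mono (Set.subset_insert _ _) hS)
    refine ⟨Projectivization.mk K (φ - S) hψ0, ⟨?_, ?_⟩, ?_⟩
    · obtain ⟨c, hc⟩ := Projectivization.exists_smul_eq_mk_rep K (φ - S) hψ0
      rw [← hc]
      exact Submodule.smul_mem _ (c : K) hspanmem
    · obtain ⟨c, hc⟩ := Projectivization.exists_smul_eq_mk_rep K (φ - S) hψ0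
      unfold inSpanI
      rw [← hc]
      exact Submodule.smul_mem (schemeSpanSub T.I d) (c : K) hψT
    · rintro Q ⟨hQ1, hQ2⟩
      obtain ⟨c, z, hz, hQ⟩ := Submodule.mem_span_insert.mp hQ1
      -- write the remainder in terms of the evaluations
      have hzform : ∃ t : Pm K m → K, ∑ a ∈ E, t a • nu d a.rep = c • S + z := by
        have : c • S + z ∈ dualSpan d (↑E : Set (Pm K m)) :=
          Submodule.add_mem _ (Submodule.smul_mem _ _ hS) hz
        obtain ⟨t, ht⟩ := (Submodule.mem_span_image_finset_iff_exists_fun K).mp this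
        refine ⟨fun a => if h : a ∈ E then t ⟨a, h⟩ else 0, ?_⟩
        rw [← ht, ← Finset.sum_coe_sort]
        refine Finset.sum_congr rfl fun a _ => ?_
        simp
      obtain ⟨t, ht⟩ := hzform
      have ht0 : ∀ a ∈ E, t a = 0 := by
        intro a ha
        have h1 : Q.rep (g a) = 0 := hQ2 _ (hgT a)
        have h2 := hψT (g a) (hgT a)
        have h3 : Q.rep = c • (φ - S) + ∑ a ∈ E, t a • nu d a.rep := by
          rw [ht, hQ, smul_sub]; abel
        rw [h3, LinearMap.add_apply, LinearMap.smul_apply, h2, smul_zero, zero_add,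
          LinearMap.sum_apply, Finset.sum_congr rfl (g := fun b => if b = a then t b else 0)] at h1
        · simpa [ha] using h1
        · intro b hb
          rw [LinearMap.smul_apply, hg a ha b hb]; simp
      have hQc : c • (φ - S) = Q.rep := by
        have h4 : c • S + z = 0 := by
          rw [← ht]; exact Finset.sum_eq_zero fun a ha => by rw [ht0 a ha, zero_smul]
        rw [hQ, smul_sub, ← sub_eq_zero, ← neg_eq_zero, ← h4]; abel
      rw [← Q.mk_rep, Projectivization.mk_eq_mk_iff']
      exact ⟨c, hQc⟩
end
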